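/- Let ℓ ≥ 2, J ⊆ ℤ/ℓℤ, and let θ ∈ ℂ^(ℤ/ℓℤ) be J-standard with Σ_{i ∈ ℤ/ℓℤ} θ_i ≠ 0. Then d ∈ E_θ if and only if d = Res_ℓ(ν) + r·δ_ℓ for some integer r ≥ 0 and some partition ν that is both an ℓ-core and a J-core. -/

import Mathlib

namespace CM

/-- The (non-linear) action of the simple reflection `s_j` on `ℤ^(ℤ/ℓℤ)`. -/
def sInt (ℓ : ℕ) (j : ZMod ℓ) (d : ZMod ℓ → ℤ) : ZMod ℓ → ℤ := fun i =>
  if i = j then (if j = 0 then 1 else 0) + d (j + 1) + d (j - 1) - d j else d i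

/-- The linear action of the simple reflection `s_j` on `ℂ^(ℤ/ℓℤ)`.
For `i ≠ j` the coefficient of `θ j` is the number of arrows between `i` and `j`
(which is `2` when `ℓ = 2`). -/
def sC (ℓ : ℕ) (j : ZMod ℓ) (θ : ZMod ℓ → ℂ) : ZMod ℓ → ℂ := fun i =>
  if i = j then -θ j
  else θ i + ((if i = j - 1 then 1 else 0) + (if i = j + 1 then 1 else 0) : ℂ) * θ j

lemma sC_sC (ℓ : ℕ) (j : ZMod ℓ) (θ : ZMod ℓ → ℂ) : sC ℓ j (sC ℓ j θ) = θ := by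
  funext i
  by_cases h : i = j
  · subst h; simp [sC]
  · simp [sC, h]

/-- `s_j` as a bijection of `ℂ^(ℤ/ℓℤ)`. -/
def sPerm (ℓ : ℕ) (j : ZMod ℓ) : Equiv.Perm (ZMod ℓ → ℂ) :=
  ⟨sC ℓ j, sC ℓ j, fun θ => sC_sC ℓ j θ, fun θ => sC_sC ℓ j θ⟩

/-- The group generated by the operators `s_j`, `j ∈ ℤ/ℓℤ`. -/
def Wgrp (ℓ : ℕ) : Subgroup (Equiv.Perm (ZMod ℓ → ℂ)) :=
  Subgroup.closure (Set.range (sPerm ℓ))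

/-- The subgroup generated by the operators `s_j`, `j ∈ J`. -/
def WJ (ℓ : ℕ) (J : Set (ZMod ℓ)) : Subgroup (Equiv.Perm (ZMod ℓ → ℂ)) :=
  Subgroup.closure (sPerm ℓ '' J)

/-- `θ` is `J`-standard if its stabilizer in `W` is exactly `W_J`. -/
def JStandard (ℓ : ℕ) (J : Set (ZMod ℓ)) (θ : ZMod ℓ → ℂ) : Prop :=
  ∀ w ∈ Wgrp ℓ, ((w : (ZMod ℓ → ℂ) → (ZMod ℓ → ℂ)) θ = θ ↔ w ∈ WJ ℓ J)

/-- Transport along an equality of vertices. -/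
def castMap {ℓ : ℕ} (d : ZMod ℓ → ℕ) {i j : ZMod ℓ} (h : i = j) :
    (Fin (d i) → ℂ) →ₗ[ℂ] (Fin (d j) → ℂ) :=
  LinearMap.funLeft ℂ ℂ (Fin.cast (congrArg d h.symm))

/-- A framed `θ`-representation of the cyclic quiver with dimension vector `d`
(dimension `1` at the framing vertex `∞`).  The moment map relation at the vertex
`i + 1` reads `X_{i+1} ∘ Y_{i+1} - Y_i ∘ X_i + δ_{i+1,0} · x ∘ y = θ_{i+1} · id`. -/
structure FRep (ℓ : ℕ) (θ : ZMod ℓ → ℂ) (d : ZMod ℓ → ℕ) where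
  X : ∀ i : ZMod ℓ, (Fin (d (i + 1)) → ℂ) →ₗ[ℂ] (Fin (d i) → ℂ)
  Y : ∀ i : ZMod ℓ, (Fin (d i) → ℂ) →ₗ[ℂ] (Fin (d (i + 1)) → ℂ)
  x : ℂ →ₗ[ℂ] (Fin (d 0) → ℂ)
  y : (Fin (d 0) → ℂ) →ₗ[ℂ] ℂ
  rel : ∀ i : ZMod ℓ,
    X (i + 1) ∘ₗ Y (i + 1) - Y i ∘ₗ X i +
      (if h : i + 1 = (0 : ZMod ℓ) then castMap d h.symm ∘ₗ x ∘ₗ y ∘ₗ castMap d h else 0) =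
    θ (i + 1) • LinearMap.id

/-- A subrepresentation of a framed representation. -/
structure FSubrep {ℓ : ℕ} {θ : ZMod ℓ → ℂ} {d : ZMod ℓ → ℕ} (R : FRep ℓ θ d) where
  U : ∀ i : ZMod ℓ, Submodule ℂ (Fin (d i) → ℂ)
  Uinf : Submodule ℂ ℂ
  hX : ∀ i : ZMod ℓ, ∀ v ∈ U (i + 1), R.X i v ∈ U i
  hY : ∀ i : ZMod ℓ, ∀ v ∈ U i, R.Y i v ∈ U (i + 1)
  hx : ∀ z ∈ Uinf, R.x z ∈ U 0
  hy : ∀ v ∈ U 0, R.y v ∈ Uinf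

/-- A framed representation is simple if its only subrepresentations are zero and itself. -/
def FSimple {ℓ : ℕ} {θ : ZMod ℓ → ℂ} {d : ZMod ℓ → ℕ} (R : FRep ℓ θ d) : Prop :=
  ∀ S : FSubrep R,
    ((∀ i, S.U i = ⊥) ∧ S.Uinf = ⊥) ∨ ((∀ i, S.U i = ⊤) ∧ S.Uinf = ⊤)

/-- `E_θ`: the set of dimension vectors of simple framed `θ`-representations. -/
def Eset (ℓ : ℕ) (θ : ZMod ℓ → ℂ) : Set (ZMod ℓ → ℕ) :=
  {d | ∃ R : FRep ℓ θ d, FSimple R}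

/-- The `∞`-residue of a box. -/
def rsd (c : ℕ × ℕ) : ℤ := (c.2 : ℤ) - (c.1 : ℤ)

/-- The `ℓ`-residue of a box. -/
def res (ℓ : ℕ) (c : ℕ × ℕ) : ZMod ℓ := (rsd c : ZMod ℓ)

/-- `Res_ℓ(μ) ∈ ℤ^(ℤ/ℓℤ)`: the number of boxes of each `ℓ`-residue. -/
def Res (ℓ : ℕ) (μ : YoungDiagram) : ZMod ℓ → ℤ := fun i =>
  ((μ.cells.filter (fun c => res ℓ c = i)).card : ℤ)

/-- The constant vector `δ_ℓ = (1,…,1)`. -/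
def delta (ℓ : ℕ) : ZMod ℓ → ℤ := fun _ => 1

/-- A box is removable if deleting it leaves a Young diagram. -/
def IsRemovable (μ : YoungDiagram) (c : ℕ × ℕ) : Prop :=
  c ∈ μ.cells ∧ ∃ ν : YoungDiagram, ν.cells = μ.cells.erase c

/-- A box is addable if adjoining it yields a Young diagram. -/
def IsAddable (μ : YoungDiagram) (c : ℕ × ℕ) : Prop :=
  c ∉ μ.cells ∧ ∃ ν : YoungDiagram, ν.cells = insert c μ.cells

/-- One step: delete one removable box. -/
def RemoveStep (μ ν : YoungDiagram) : Prop :=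
  ∃ c, IsRemovable μ c ∧ ν.cells = μ.cells.erase c

/-- `ν` is obtainable from `μ` by successively deleting removable boxes. -/
def Obtainable (μ ν : YoungDiagram) : Prop :=
  Relation.ReflTransGen RemoveStep μ ν

/-- `λ` is an `ℓ`-core: no partition obtainable from `λ` by deleting removable boxes
differs from `λ` by exactly `ℓ` boxes of pairwise distinct `ℓ`-residues. -/
def IsCore (ℓ : ℕ) (lam : YoungDiagram) : Prop :=
  ¬ ∃ μ : YoungDiagram, Obtainable lam μ ∧ (lam.cells \ μ.cells).card = ℓ ∧
      Set.InjOn (res ℓ) ↑(lam.cells \ μ.cells)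

/-- One step of the `ℓ`-core process: delete (via removable-box deletions) `ℓ` boxes
of pairwise distinct `ℓ`-residues. -/
def CoreStep (ℓ : ℕ) (μ ν : YoungDiagram) : Prop :=
  Obtainable μ ν ∧ (μ.cells \ ν.cells).card = ℓ ∧
    Set.InjOn (res ℓ) ↑(μ.cells \ ν.cells)

/-- `ν` is the `ℓ`-core of `λ`: it is an `ℓ`-core reached from `λ` by the core process. -/
def ReachesCore (ℓ : ℕ) (lam ν : YoungDiagram) : Prop :=
  Relation.ReflTransGen (CoreStep ℓ) lam ν ∧ IsCore ℓ ν

/-- A `J`-removable box: a removable box whose `ℓ`-residue lies in `J`. -/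
def IsJRemovable (ℓ : ℕ) (J : Set (ZMod ℓ)) (μ : YoungDiagram) (c : ℕ × ℕ) : Prop :=
  IsRemovable μ c ∧ res ℓ c ∈ J

/-- A `J`-core: a partition with no `J`-removable boxes. -/
def IsJCore (ℓ : ℕ) (J : Set (ZMod ℓ)) (μ : YoungDiagram) : Prop :=
  ∀ c, ¬ IsJRemovable ℓ J μ c

/-- One step: delete one `J`-removable box. -/
def JRemoveStep (ℓ : ℕ) (J : Set (ZMod ℓ)) (μ ν : YoungDiagram) : Prop :=
  ∃ c, IsJRemovable ℓ J μ c ∧ ν.cells = μ.cells.erase c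

/-- `ν` is a `J`-core of `λ`, obtained by successively deleting `J`-removable boxes. -/
def JReaches (ℓ : ℕ) (J : Set (ZMod ℓ)) (lam ν : YoungDiagram) : Prop :=
  Relation.ReflTransGen (JRemoveStep ℓ J) lam ν ∧ IsJCore ℓ J ν

/-! ### Dimension vectors -/

/-- pairing of the weight attached to `d` with the simple root `α_j`. -/
def pr {ℓ : ℕ} (d : ZMod ℓ → ℤ) (j : ZMod ℓ) : ℤ :=
  (if j = 0 then 1 else 0) + d (j + 1) + d (j - 1) - 2 * d j

/-- `d + c α_j` -/
def upd {ℓ : ℕ} (j : ZMod ℓ) (c : ℤ) (d : ZMod ℓ → ℤ) : ZMod ℓ → ℤ :=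
  fun i => d i + c * (if i = j then 1 else 0)

def Qf {ℓ : ℕ} [NeZero ℓ] (d : ZMod ℓ → ℤ) : ℤ := ∑ i, (d (i + 1) - d i) ^ 2

def Ff {ℓ : ℕ} [NeZero ℓ] (d : ZMod ℓ → ℤ) : ℤ := 2 * d 0 - Qf d

lemma zmod_one_ne {ℓ : ℕ} (hℓ : 2 ≤ ℓ) : (1 : ZMod ℓ) ≠ 0 := by
  have : Fact (1 < ℓ) := ⟨hℓ⟩
  exact one_ne_zero

lemma Qf_upd {ℓ : ℕ} [NeZero ℓ] (hℓ : 2 ≤ ℓ) (j : ZMod ℓ) (c : ℤ) (d : ZMod ℓ → ℤ) :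
    Qf (upd j c d) = Qf d + 2 * c * (2 * d j - d (j + 1) - d (j - 1)) + 2 * c ^ 2 := by
  have h1 := zmod_one_ne hℓ
  have key : ∀ i : ZMod ℓ, (upd j c d (i + 1) - upd j c d i) ^ 2 = (d (i + 1) - d i) ^ 2
      + ((if i = j - 1 then 2 * c * (d (i + 1) - d i) + c ^ 2 else 0)
        + (if i = j then - 2 * c * (d (i + 1) - d i) + c ^ 2 else 0)) := by
    intro i
    unfold upd
    by_cases h : i = j
    · subst h
      have : ¬ (i = i - 1) := by
        intro h; apply h1; linear_combination h
      simp [this, h1]; ring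
    · by_cases h' : i = j - 1
      · subst h'
        have : ¬ (j - 1 = j) := h
        simp [this]; ring
      · have : ¬ (i + 1 = j) := fun h2 => h' (by rw [← h2]; ring)
        simp [h, h', this]
  unfold Qf
  rw [Finset.sum_congr rfl (fun i _ => key i), Finset.sum_add_distrib, Finset.sum_add_distrib,
    Finset.sum_ite_eq' , Finset.sum_ite_eq']
  simp
  ring

lemma sInt_eq {ℓ : ℕ} (j : ZMod ℓ) (d : ZMod ℓ → ℤ) : sInt ℓ j d = upd j (pr d j) d := by
  funext i
  unfold sInt upd pr
  by_cases h : i = j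
  · subst h; simp; ring
  · simp [h]

lemma Ff_sInt {ℓ : ℕ} [NeZero ℓ] (hℓ : 2 ≤ ℓ) (j : ZMod ℓ) (d : ZMod ℓ → ℤ) :
    Ff (sInt ℓ j d) = Ff d := by
  rw [sInt_eq]
  unfold Ff
  rw [Qf_upd hℓ]
  unfold upd pr
  by_cases h : j = 0
  · subst h; simp; ring
  · simp [h, Ne.symm h]; ring

lemma sum_upd {ℓ : ℕ} [NeZero ℓ] (j : ZMod ℓ) (c : ℤ) (d : ZMod ℓ → ℤ) :
    ∑ i, upd j c d i = ∑ i, d i + c := by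
  unfold upd
  rw [Finset.sum_add_distrib]; simp

lemma const_of_shift {ℓ : ℕ} [NeZero ℓ] {α : Type*} (f : ZMod ℓ → α)
    (h : ∀ j, f (j + 1) = f j) (j : ZMod ℓ) : f j = f 0 := by
  have : ∀ n : ℕ, f (n : ZMod ℓ) = f 0 := by
    intro n
    induction n with
    | zero => simp
    | succ n ih => push_cast; rw [h, ih]
  rw [← ZMod.natCast_zmod_val j]; exact this _

lemma sum_shift {ℓ : ℕ} [NeZero ℓ] {M : Type*} [AddCommMonoid M] (f : ZMod ℓ → M) (a : ZMod ℓ) :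
    ∑ i, f (i + a) = ∑ i, f i :=
  Equiv.sum_comp (Equiv.addRight a) f

lemma sum_pr {ℓ : ℕ} [NeZero ℓ] (d : ZMod ℓ → ℤ) : ∑ j, pr d j = 1 := by
  unfold pr
  have h1 := sum_shift d 1
  have h2 := sum_shift d (-1)
  simp only [← sub_eq_add_neg] at h2
  rw [Finset.sum_sub_distrib, Finset.sum_add_distrib, Finset.sum_add_distrib, h1, h2,
    ← Finset.mul_sum]
  simp; ring

lemma sum_mul_pr {ℓ : ℕ} [NeZero ℓ] (d : ZMod ℓ → ℤ) :
    ∑ j : ZMod ℓ, j * ((pr d j : ℤ) : ZMod ℓ) = 0 := by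
  have h1 := sum_shift (fun j : ZMod ℓ => (j - 1) * (d j : ZMod ℓ)) 1
  have h2 := sum_shift (fun j : ZMod ℓ => (j + 1) * (d j : ZMod ℓ)) (-1)
  simp only [← sub_eq_add_neg, add_sub_cancel_right, sub_add_cancel] at h1 h2
  have : ∀ j : ZMod ℓ, j * ((pr d j : ℤ) : ZMod ℓ)
      = j * (d (j + 1) : ZMod ℓ) + j * (d (j - 1) : ZMod ℓ) - 2 * (j * (d j : ZMod ℓ)) := by
    intro j
    unfold pr
    by_cases h : j = 0
    · subst h; simp
    · simp [h]; ring
  rw [Finset.sum_congr rfl (fun j _ => this j), Finset.sum_sub_distrib, Finset.sum_add_distrib, h1,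
    h2, ← Finset.sum_add_distrib, ← Finset.sum_sub_distrib]
  apply Finset.sum_eq_zero
  intro j _; ring

lemma const_of_pr_nonneg {ℓ : ℕ} [NeZero ℓ] (d : ZMod ℓ → ℤ) (h : ∀ j, 0 ≤ pr d j) :
    ∀ j, d j = d 0 := by
  have hs := sum_pr d
  have hm := sum_mul_pr d
  obtain ⟨j0, hj0⟩ : ∃ j0, 0 < pr d j0 := by
    by_contra hcon
    push Not at hcon
    have : ∑ j, pr d j ≤ 0 := Finset.sum_nonpos (fun j _ => hcon j)
    omega
  have hsplit := Finset.add_sum_erase Finset.univ (pr d) (Finset.mem_univ j0)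
  have hnn : 0 ≤ ∑ j ∈ Finset.univ.erase j0, pr d j := Finset.sum_nonneg (fun j _ => h j)
  have hz : ∑ j ∈ Finset.univ.erase j0, pr d j = 0 := by omega
  have hz' := (Finset.sum_eq_zero_iff_of_nonneg (fun j _ => h j)).1 hz
  have hp1 : pr d j0 = 1 := by omega
  have hne : ∀ j, j ≠ j0 → pr d j = 0 := fun j hj => hz' j (by simp [hj])
  have hj00 : j0 = 0 := by
    rw [Finset.sum_eq_single j0] at hm
    · simpa [hp1] using hm
    · intro j _ hj; simp [hne j hj]
    · simp
  subst hj00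
  have hD : ∀ j : ZMod ℓ, d (j + 1 + 1) - d (j + 1) = d (j + 1) - d j := by
    intro j
    have h3 : pr d (j + 1) = if j + 1 = 0 then 1 else 0 := by
      split_ifs with h4
      · rw [h4, hp1]
      · exact hne _ h4
    unfold pr at h3
    rw [add_sub_cancel_right] at h3
    omega
  have hc := const_of_shift (fun j => d (j + 1) - d j) hD
  have hsum : ∑ j, (d (j + 1) - d j) = 0 := by
    rw [Finset.sum_sub_distrib, sum_shift d 1]; simp
  rw [Finset.sum_congr rfl (fun j _ => hc j)] at hsum
  have hD0 : d (0 + 1) - d 0 = 0 := by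
    simp only [Finset.sum_const, Finset.card_univ, ZMod.card, nsmul_eq_mul, mul_eq_zero] at hsum
    rcases hsum with h | h
    · exact absurd h (by exact_mod_cast NeZero.ne ℓ)
    · exact h
  apply const_of_shift
  intro j
  have : d (j + 1) - d j = d (0 + 1) - d 0 := hc j
  omega

lemma tv_path {ℓ : ℕ} (f : ZMod ℓ → ℤ) (b : ZMod ℓ) (m n : ℕ) (h : m ≤ n) :
    |f (b + n) - f (b + m)| ≤ ∑ k ∈ Finset.Ico m n, |f (b + k + 1) - f (b + k)| := by
  induction n, h using Nat.le_induction with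
  | base => simp
  | succ n hmn ih =>
    rw [Finset.sum_Ico_succ_top hmn]
    push_cast
    have h1 := abs_sub_le (f (b + n + 1)) (f (b + n)) (f (b + m))
    rw [add_assoc] at h1
    rw [add_assoc b]
    linarith

lemma sum_zmod_range {ℓ : ℕ} [NeZero ℓ] {M : Type*} [AddCommMonoid M] (f : ZMod ℓ → M) :
    ∑ i, f i = ∑ k ∈ Finset.range ℓ, f (k : ZMod ℓ) := by
  symm
  apply Finset.sum_bij' (fun (k : ℕ) _ => (k : ZMod ℓ)) (fun (i : ZMod ℓ) _ => i.val)
  · simp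
  · intro i _; simpa using ZMod.val_lt i
  · intro k hk; exact ZMod.val_cast_of_lt (by simpa using hk)
  · intro i _; simp
  · simp

lemma tv {ℓ : ℕ} [NeZero ℓ] (f : ZMod ℓ → ℤ) (a b : ZMod ℓ) :
    2 * (f a - f b) ≤ Qf f := by
  have h0 : ∑ i, |f (i + 1) - f i| ≤ Qf f := by
    apply Finset.sum_le_sum
    intro i _
    rw [← sq_abs]
    have := abs_nonneg (f (i + 1) - f i)
    by_cases h : |f (i + 1) - f i| = 0
    · rw [h]; norm_num
    · have : 1 ≤ |f (i + 1) - f i| := by omega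
      nlinarith
  have h1 : ∑ i, |f (i + 1) - f i| = ∑ k ∈ Finset.Ico 0 ℓ, |f (b + k + 1) - f (b + k)| := by
    rw [← sum_shift _ b, sum_zmod_range, Finset.range_eq_Ico]
    apply Finset.sum_congr rfl
    intro k _; rw [add_comm _ b]
  have hn : (a - b).val < ℓ := ZMod.val_lt _
  have p1 := tv_path f b 0 (a - b).val (Nat.zero_le _)
  have p2 := tv_path f b (a - b).val ℓ hn.le
  rw [← Finset.sum_Ico_consecutive _ (Nat.zero_le _) hn.le] at h1
  simp only [ZMod.natCast_zmod_val, Nat.cast_zero, CharP.cast_eq_zero, add_zero, add_sub_cancel] at p1 p2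
  have := le_abs_self (f a - f b)
  have := neg_abs_le (f b - f a)
  linarith

lemma nonneg_of_Ff {ℓ : ℕ} [NeZero ℓ] (d : ZMod ℓ → ℤ) (h : 0 ≤ Ff d) (i : ZMod ℓ) : 0 ≤ d i := by
  have := tv d 0 i
  unfold Ff at h
  omega

lemma Qf_const {ℓ : ℕ} [NeZero ℓ] (d : ZMod ℓ → ℤ) (h : ∀ j, d j = d 0) : Qf d = 0 := by
  unfold Qf
  apply Finset.sum_eq_zero
  intro i _
  rw [h (i + 1), h i]; ring

lemma pr_add_const {ℓ : ℕ} (d : ZMod ℓ → ℤ) (r : ℤ) (j : ZMod ℓ) :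
    pr (fun i => d i + r) j = pr d j := by
  unfold pr; ring

lemma Ff_add_const {ℓ : ℕ} [NeZero ℓ] (d : ZMod ℓ → ℤ) (r : ℤ) :
    Ff (fun i => d i + r) = Ff d + 2 * r := by
  unfold Ff Qf
  simp only [add_sub_add_right_eq_sub]; ring

lemma pr_sInt {ℓ : ℕ} (hℓ : 2 ≤ ℓ) (j : ZMod ℓ) (d : ZMod ℓ → ℤ) :
    pr (sInt ℓ j d) j = - pr d j := by
  have h1 := zmod_one_ne hℓ
  have a : ¬ (j + 1 = j) := by simpa using h1
  have b : ¬ (j - 1 = j) := by intro h; apply h1; linear_combination -h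
  unfold pr sInt
  simp [a, b]; ring

lemma sInt_sInt {ℓ : ℕ} (hℓ : 2 ≤ ℓ) (j : ZMod ℓ) (d : ZMod ℓ → ℤ) :
    sInt ℓ j (sInt ℓ j d) = d := by
  rw [sInt_eq, pr_sInt hℓ, sInt_eq]
  funext i; unfold upd; ring

/-- Descent principle along reflections. -/
lemma descent {ℓ : ℕ} [NeZero ℓ] (hℓ : 2 ≤ ℓ) (P : (ZMod ℓ → ℤ) → Prop)
    (h0 : ∀ r : ℕ, P (fun _ => (r : ℤ)))
    (h1 : ∀ d j, (∀ i, 0 ≤ d i) → pr d j < 0 → 0 ≤ Ff (sInt ℓ j d) →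
      (∀ i, 0 ≤ sInt ℓ j d i) → P (sInt ℓ j d) → P d)
    (d : ZMod ℓ → ℤ) (hF : 0 ≤ Ff d) : P d := by
  induction hn : (∑ i, d i).toNat using Nat.strong_induction_on generalizing d with
  | _ n ih =>
  have hd := nonneg_of_Ff d hF
  by_cases hj : ∃ j, pr d j < 0
  · obtain ⟨j, hj⟩ := hj
    have hF' : 0 ≤ Ff (sInt ℓ j d) := by rw [Ff_sInt hℓ]; exact hF
    have hd' := nonneg_of_Ff _ hF'
    refine h1 d j hd hj hF' hd' (ih _ ?_ _ hF' rfl)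
    rw [← hn]
    have s0 : 0 ≤ ∑ i, sInt ℓ j d i := Finset.sum_nonneg (fun i _ => hd' i)
    have s1 : ∑ i, sInt ℓ j d i = ∑ i, d i + pr d j := by rw [sInt_eq, sum_upd]
    omega
  · push Not at hj
    have hc := const_of_pr_nonneg d hj
    have : d = fun _ => ((d 0).toNat : ℤ) := by
      funext i; rw [hc i, Int.toNat_of_nonneg (hd 0)]
    rw [this]; exact h0 _

/-! ### Real roots -/

def Cm {ℓ : ℕ} (β : ZMod ℓ → ℤ) (i : ZMod ℓ) : ℤ := 2 * β i - β (i + 1) - β (i - 1)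

def Ca {ℓ : ℕ} (j i : ZMod ℓ) : ℤ :=
  2 * (if i = j then 1 else 0) - (if i = j - 1 then 1 else 0) - (if i = j + 1 then 1 else 0)

def sroot {ℓ : ℕ} (j : ZMod ℓ) : ZMod ℓ → ℤ := upd j 1 (fun _ => 0)

def rf {ℓ : ℕ} (j : ZMod ℓ) (β : ZMod ℓ → ℤ) : ZMod ℓ → ℤ := upd j (- Cm β j) β

inductive IsRt {ℓ : ℕ} : (ZMod ℓ → ℤ) → Prop
  | simple (j : ZMod ℓ) : IsRt (sroot j)
  | refl (j : ZMod ℓ) (β : ZMod ℓ → ℤ) : IsRt β → IsRt (rf j β)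

lemma IsRt.Qf_eq {ℓ : ℕ} [NeZero ℓ] (hℓ : 2 ≤ ℓ) {β : ZMod ℓ → ℤ} (h : IsRt β) : Qf β = 2 := by
  induction h with
  | simple j =>
    unfold sroot
    rw [Qf_upd hℓ, Qf_const _ (fun _ => rfl)]; norm_num
  | refl j β _ ih =>
    unfold rf
    rw [Qf_upd hℓ, ih]
    unfold Cm; ring

lemma IsRt.sign {ℓ : ℕ} [NeZero ℓ] (hℓ : 2 ≤ ℓ) {β : ZMod ℓ → ℤ} (h : IsRt β) :
    (∀ i, 0 ≤ β i) ∨ (∀ i, β i ≤ 0) := by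
  by_contra hcon
  push Not at hcon
  obtain ⟨⟨b, hb⟩, ⟨a, ha⟩⟩ := hcon
  have := tv β a b
  rw [h.Qf_eq hℓ] at this
  omega

lemma IsRt.refl_nonneg {ℓ : ℕ} [NeZero ℓ] (hℓ : 2 ≤ ℓ) {β : ZMod ℓ → ℤ} (h : IsRt β)
    (hp : ∀ i, 0 ≤ β i) (j : ZMod ℓ) (hne : β ≠ sroot j) : ∀ i, 0 ≤ rf j β i := by
  rcases (IsRt.refl j β h).sign hℓ with h1 | h1
  · exact h1
  exfalso
  apply hne
  have hz : ∀ i, i ≠ j → β i = 0 := by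
    intro i hi
    have := h1 i
    simp [rf, upd, hi] at this
    have := hp i
    omega
  have hb : β = upd j (β j) (fun _ => 0) := by
    funext i
    unfold upd
    by_cases hi : i = j
    · simp [hi]
    · simp [hi, hz i hi]
  have hq := h.Qf_eq hℓ
  rw [hb, Qf_upd hℓ, Qf_const _ (fun _ => rfl)] at hq
  have h2 := hp j
  have : β j = 1 := by nlinarith
  rw [hb, this]; rfl

lemma Ca_eq_Cm {ℓ : ℕ} (j i : ZMod ℓ) : Cm (sroot j) i = Ca j i := by
  unfold Cm sroot upd Ca
  have e1 : (i + 1 = j) = (i = j - 1) := by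
    apply propext; constructor <;> intro h
    · rw [← h]; ring
    · rw [h]; ring
  have e2 : (i - 1 = j) = (i = j + 1) := by
    apply propext; constructor <;> intro h
    · rw [← h]; ring
    · rw [h]; ring
  simp only [e1, e2]; ring

lemma Cm_upd {ℓ : ℕ} (j : ZMod ℓ) (c : ℤ) (β : ZMod ℓ → ℤ) (i : ZMod ℓ) :
    Cm (upd j c β) i = Cm β i + c * Ca j i := by
  rw [← Ca_eq_Cm]
  unfold Cm sroot upd; ring

lemma pr_upd {ℓ : ℕ} (j : ZMod ℓ) (c : ℤ) (d : ZMod ℓ → ℤ) (i : ZMod ℓ) :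
    pr (upd j c d) i = pr d i - c * Ca j i := by
  have h := Cm_upd j c d i
  unfold Cm at h
  unfold pr
  linear_combination -h

lemma sC_eq {ℓ : ℕ} (hℓ : 2 ≤ ℓ) (j : ZMod ℓ) (θ : ZMod ℓ → ℂ) (i : ZMod ℓ) :
    sC ℓ j θ i = θ i - θ j * (Ca j i : ℂ) := by
  have h1 := zmod_one_ne hℓ
  unfold sC Ca
  by_cases h : i = j
  · subst h
    have a : ¬ (i = i + 1) := by simpa using h1
    have b : ¬ (i = i - 1) := by intro h; apply h1; linear_combination h
    simp [a, b]; ring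
  · simp [h]; ring

def dot {ℓ : ℕ} [NeZero ℓ] {R : Type*} [CommRing R] (θ : ZMod ℓ → R) (β : ZMod ℓ → ℤ) : R :=
  ∑ i, θ i * (β i : R)

lemma sum_ind {ℓ : ℕ} [NeZero ℓ] {R : Type*} [CommRing R] (f : ZMod ℓ → R) (j : ZMod ℓ) :
    ∑ i, (if i = j then (1 : R) else 0) * f i = f j := by
  simp

lemma dot_refl {ℓ : ℕ} [NeZero ℓ] {R : Type*} [CommRing R] (f : ZMod ℓ → R) (j : ZMod ℓ)
    (β : ZMod ℓ → ℤ) :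
    dot (fun i => f i - f j * (Ca j i : R)) β = dot f (rf j β) := by
  unfold dot rf upd
  have e1 : ∀ i, (f i - f j * (Ca j i : R)) * (β i : R) = f i * (β i : R)
      - f j * (2 * ((if i = j then (1 : R) else 0) * (β i : R))
        - (if i = j - 1 then (1 : R) else 0) * (β i : R)
        - (if i = j + 1 then (1 : R) else 0) * (β i : R)) := by
    intro i; unfold Ca; push_cast; ring
  have e2 : ∀ i, f i * ((β i + - Cm β j * (if i = j then 1 else 0) : ℤ) : R) = f i * (β i : R)
      - (Cm β j : R) * ((if i = j then (1 : R) else 0) * f i) := by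
    intro i; push_cast; ring
  rw [Finset.sum_congr rfl (fun i _ => e1 i), Finset.sum_congr rfl (fun i _ => e2 i),
    Finset.sum_sub_distrib, Finset.sum_sub_distrib, ← Finset.mul_sum, ← Finset.mul_sum,
    Finset.sum_sub_distrib, Finset.sum_sub_distrib, ← Finset.mul_sum,
    sum_ind (fun i => (β i : R)), sum_ind (fun i => (β i : R)),
    sum_ind (fun i => (β i : R)), sum_ind f]
  unfold Cm; push_cast; ring

lemma dot_sC {ℓ : ℕ} [NeZero ℓ] (hℓ : 2 ≤ ℓ) (j : ZMod ℓ) (θ : ZMod ℓ → ℂ) (β : ZMod ℓ → ℤ) :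
    dot (sC ℓ j θ) β = dot θ (rf j β) := by
  rw [← dot_refl]; congr 1; funext i; exact sC_eq hℓ j θ i

lemma dot_pr_sInt {ℓ : ℕ} [NeZero ℓ] (j : ZMod ℓ) (d : ZMod ℓ → ℤ) (β : ZMod ℓ → ℤ) :
    dot (pr (sInt ℓ j d)) β = dot (pr d) (rf j β) := by
  rw [← dot_refl, sInt_eq]; congr 1; funext i; rw [pr_upd]; simp

lemma dot_sroot {ℓ : ℕ} [NeZero ℓ] {R : Type*} [CommRing R] (f : ZMod ℓ → R) (j : ZMod ℓ) :
    dot f (sroot j) = f j := by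
  unfold dot sroot upd; simp

/-- The condition propagated along the descent. -/
def Cond {ℓ : ℕ} [NeZero ℓ] (θ : ZMod ℓ → ℂ) (d : ZMod ℓ → ℤ) : Prop :=
  ∀ β, IsRt β → (∀ i, 0 ≤ β i) → dot θ β = 0 → 0 ≤ dot (pr d) β

lemma Cond.ne_zero {ℓ : ℕ} [NeZero ℓ] {θ : ZMod ℓ → ℂ} {d : ZMod ℓ → ℤ} (h : Cond θ d)
    (j : ZMod ℓ) (hj : pr d j < 0) : θ j ≠ 0 := by
  intro h0
  have := h (sroot j) (IsRt.simple j)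
    (by intro i; unfold sroot upd; split_ifs <;> simp) (by rw [dot_sroot, h0])
  rw [dot_sroot] at this
  omega

lemma Cond.refl {ℓ : ℕ} [NeZero ℓ] (hℓ : 2 ≤ ℓ) {θ : ZMod ℓ → ℂ} {d : ZMod ℓ → ℤ} (h : Cond θ d)
    (j : ZMod ℓ) (hj : pr d j < 0) : Cond (sC ℓ j θ) (sInt ℓ j d) := by
  intro β hβ hp h0
  by_cases hs : β = sroot j
  · subst hs
    rw [dot_sroot, pr_sInt hℓ]; omega
  · rw [dot_sC hℓ] at h0
    rw [dot_pr_sInt]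
    exact h _ (IsRt.refl j β hβ) (hβ.refl_nonneg hℓ hp j hs) h0

lemma IsRt.reflection {ℓ : ℕ} [NeZero ℓ] (hℓ : 2 ≤ ℓ) {β : ZMod ℓ → ℤ} (h : IsRt β) :
    ∃ w ∈ Wgrp ℓ, ∀ θ : ZMod ℓ → ℂ, w θ = fun i => θ i - dot θ β * (Cm β i : ℂ) := by
  induction h with
  | simple j =>
    refine ⟨sPerm ℓ j, Subgroup.subset_closure ⟨j, rfl⟩, ?_⟩
    intro θ
    funext i
    rw [dot_sroot, Ca_eq_Cm, ← sC_eq hℓ]; rfl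
  | refl j β _ ih =>
    obtain ⟨w, hw, hwθ⟩ := ih
    have hs : sPerm ℓ j ∈ Wgrp ℓ := Subgroup.subset_closure ⟨j, rfl⟩
    refine ⟨sPerm ℓ j * w * sPerm ℓ j, mul_mem (mul_mem hs hw) hs, ?_⟩
    intro θ
    have e : (sPerm ℓ j * w * sPerm ℓ j) θ = sC ℓ j (w (sC ℓ j θ)) := rfl
    rw [e, hwθ]
    funext i
    rw [sC_eq hℓ, dot_sC hℓ]
    have h2 : sC ℓ j (sC ℓ j θ) i = θ i := by rw [sC_sC]
    rw [sC_eq hℓ] at h2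
    have h3 : Cm (rf j β) i = Cm β i - Cm β j * Ca j i := by
      unfold rf; rw [Cm_upd]; ring
    rw [h3]
    push_cast
    linear_combination h2

lemma dot_Cm {ℓ : ℕ} [NeZero ℓ] (β : ZMod ℓ → ℤ) : ∑ i, β i * Cm β i = Qf β := by
  unfold Qf Cm
  have h1 := sum_shift (fun i => β i ^ 2) 1
  have h2 := sum_shift (fun i => β i * β (i - 1)) 1
  simp only [add_sub_cancel_right] at h2
  have e1 : ∀ i, β i * (2 * β i - β (i + 1) - β (i - 1))
    = 2 * β i ^ 2 - β i * β (i - 1) - β (i + 1) * β i := by intro i; ring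
  have e2 : ∀ i, (β (i + 1) - β i) ^ 2
    = β (i + 1) ^ 2 + β i ^ 2 - 2 * (β (i + 1) * β i) := by intro i; ring
  rw [Finset.sum_congr rfl (fun i _ => e1 i), Finset.sum_congr rfl (fun i _ => e2 i),
    Finset.sum_sub_distrib, Finset.sum_sub_distrib, Finset.sum_sub_distrib,
    Finset.sum_add_distrib, h1, ← Finset.mul_sum, ← Finset.mul_sum, ← h2]
  ring

lemma WJ_fix {ℓ : ℕ} (J : Set (ZMod ℓ)) (η : ZMod ℓ → ℂ) (h : ∀ j ∈ J, η j = 0)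
    (w : Equiv.Perm (ZMod ℓ → ℂ)) (hw : w ∈ WJ ℓ J) : w η = η := by
  have hle : WJ ℓ J ≤ MulAction.stabilizer (Equiv.Perm (ZMod ℓ → ℂ)) η := by
    unfold WJ
    rw [Subgroup.closure_le]
    rintro _ ⟨j, hj, rfl⟩
    change sC ℓ j η = η
    funext i
    unfold sC
    rw [h j hj]
    by_cases hi : i = j
    · subst hi; simp [h i hj]
    · simp [hi]
  exact hle hw

lemma JStandard.zero {ℓ : ℕ} {J : Set (ZMod ℓ)} {θ : ZMod ℓ → ℂ} (h : JStandard ℓ J θ)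
    (j : ZMod ℓ) (hj : j ∈ J) : θ j = 0 := by
  have h1 := (h (sPerm ℓ j) (Subgroup.subset_closure ⟨j, rfl⟩)).2
    (Subgroup.subset_closure ⟨j, hj, rfl⟩)
  have h2 := congrFun h1 j
  change sC ℓ j θ j = θ j at h2
  simp [sC] at h2
  linear_combination -h2 / 2

lemma JStandard.cond {ℓ : ℕ} [NeZero ℓ] (hℓ : 2 ≤ ℓ) {J : Set (ZMod ℓ)} {θ : ZMod ℓ → ℂ}
    (h : JStandard ℓ J θ) (d : ZMod ℓ → ℤ) (hd : ∀ j ∈ J, 0 ≤ pr d j) : Cond θ d := by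
  intro β hβ hp h0
  obtain ⟨w, hw, hwθ⟩ := hβ.reflection hℓ
  have hfix : w θ = θ := by rw [hwθ, h0]; simp
  have hwJ := (h w hw).1 hfix
  have hsupp : ∀ k, k ∉ J → β k = 0 := by
    intro k hk
    have h1 := WJ_fix J (fun i => if i = k then 1 else 0)
      (by intro j hj; have : j ≠ k := fun e => hk (e ▸ hj)
          simp [this]) w hwJ
    rw [hwθ] at h1
    have hdot : dot (fun i => if i = k then (1 : ℂ) else 0) β = (β k : ℂ) := by
      unfold dot; exact sum_ind (fun i => (β i : ℂ)) k
    rw [hdot] at h1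
    by_contra hne
    have hC : ∀ i, Cm β i = 0 := by
      intro i
      have h2 := congrFun h1 i
      simp only [sub_eq_self, mul_eq_zero, Int.cast_eq_zero] at h2
      exact h2.resolve_left hne
    have := dot_Cm β
    rw [hβ.Qf_eq hℓ] at this
    simp [hC] at this
  unfold dot
  apply Finset.sum_nonneg
  intro i _
  by_cases hi : i ∈ J
  · exact mul_nonneg (hd i hi) (by simpa using hp i)
  · simp [hsupp i hi]

/-! ### Representations inside an ambient space -/

structure GRep (ℓ : ℕ) (θ : ZMod ℓ → ℂ) (E : Type) [AddCommGroup E] [Module ℂ E] where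
  S : ZMod ℓ → Submodule ℂ E
  X : ZMod ℓ → E →ₗ[ℂ] E
  Y : ZMod ℓ → E →ₗ[ℂ] E
  x : E
  y : E →ₗ[ℂ] ℂ
  hX : ∀ i, ∀ v ∈ S (i + 1), X i v ∈ S i
  hY : ∀ i, ∀ v ∈ S i, Y i v ∈ S (i + 1)
  hx : x ∈ S 0
  rel : ∀ i, ∀ v ∈ S (i + 1), X (i + 1) (Y (i + 1) v) - Y i (X i v) +
    (if i + 1 = 0 then y v • x else 0) = θ (i + 1) • v

def GSimple {ℓ : ℕ} {θ : ZMod ℓ → ℂ} {E : Type} [AddCommGroup E] [Module ℂ E]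
    (R : GRep ℓ θ E) : Prop :=
  ∀ (U : ZMod ℓ → Submodule ℂ E) (P : Prop), (∀ i, U i ≤ R.S i) →
    (∀ i, ∀ v ∈ U (i + 1), R.X i v ∈ U i) → (∀ i, ∀ v ∈ U i, R.Y i v ∈ U (i + 1)) →
    (P → R.x ∈ U 0) → (¬ P → ∀ v ∈ U 0, R.y v = 0) →
    ((∀ i, U i = ⊥) ∧ ¬ P) ∨ ((∀ i, U i = R.S i) ∧ P)

def GE (ℓ : ℕ) (θ : ZMod ℓ → ℂ) (d : ZMod ℓ → ℕ) : Prop :=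
  ∃ (E : Type) (_ : AddCommGroup E) (_ : Module ℂ E) (_ : FiniteDimensional ℂ E)
    (R : GRep ℓ θ E), GSimple R ∧ ∀ i, Module.finrank ℂ (R.S i) = d i

lemma castMap_rfl {ℓ : ℕ} (d : ZMod ℓ → ℕ) (i : ZMod ℓ) (v : Fin (d i) → ℂ) :
    castMap d (rfl : i = i) v = v := rfl

lemma single_castMap {ℓ : ℕ} [NeZero ℓ] (d : ZMod ℓ → ℕ) (i : ZMod ℓ) (h : i = 0)
    (v : Fin (d 0) → ℂ) :
    LinearMap.single ℂ (fun i => Fin (d i) → ℂ) i (castMap d h.symm v)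
      = LinearMap.single ℂ (fun i => Fin (d i) → ℂ) 0 v := by
  subst h; rfl

lemma proj_single_cast {ℓ : ℕ} [NeZero ℓ] (d : ZMod ℓ → ℕ) (i : ZMod ℓ) (h : i = 0)
    (v : Fin (d i) → ℂ) :
    (LinearMap.single ℂ (fun i => Fin (d i) → ℂ) i v) 0 = castMap d h v := by
  subst h; rw [castMap_rfl]; simp

def FRep.toG {ℓ : ℕ} [NeZero ℓ] {θ : ZMod ℓ → ℂ} {d : ZMod ℓ → ℕ} (R : FRep ℓ θ d) :
    GRep ℓ θ (∀ i, Fin (d i) → ℂ) where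
  S i := LinearMap.range (LinearMap.single ℂ (fun i => Fin (d i) → ℂ) i)
  X i := LinearMap.single ℂ (fun i => Fin (d i) → ℂ) i ∘ₗ R.X i ∘ₗ LinearMap.proj (i + 1)
  Y i := LinearMap.single ℂ (fun i => Fin (d i) → ℂ) (i + 1) ∘ₗ R.Y i ∘ₗ LinearMap.proj i
  x := LinearMap.single ℂ (fun i => Fin (d i) → ℂ) 0 (R.x 1)
  y := R.y ∘ₗ LinearMap.proj 0
  hX i v _ := ⟨_, rfl⟩
  hY i v _ := ⟨_, rfl⟩
  hx := ⟨_, rfl⟩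
  rel := by
    rintro i _ ⟨v, rfl⟩
    have h := LinearMap.congr_fun (R.rel i) v
    have h' := congrArg (LinearMap.single ℂ (fun i => Fin (d i) → ℂ) (i + 1)) h
    simp only [LinearMap.add_apply, LinearMap.sub_apply, map_add, map_sub, LinearMap.smul_apply,
      LinearMap.id_apply, map_smul] at h'
    rw [← h']
    congr 1
    · simp
    · by_cases hi : i + 1 = 0
      · simp only [hi, ↓reduceDIte, ↓reduceIte, LinearMap.comp_apply]
        rw [single_castMap d _ hi]
        rw [← map_smul, ← map_smul]
        congr 2
        simp only [LinearMap.proj_apply, smul_eq_mul, mul_one]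
        rw [proj_single_cast d _ hi]
      · simp [hi]

lemma Eset_to_GE {ℓ : ℕ} [NeZero ℓ] {θ : ZMod ℓ → ℂ} {d : ZMod ℓ → ℕ} (h : d ∈ Eset ℓ θ) :
    GE ℓ θ d := by
  classical
  obtain ⟨R, hR⟩ := h
  refine ⟨∀ i, Fin (d i) → ℂ, inferInstance, inferInstance, inferInstance, R.toG, ?_, ?_⟩
  · intro U P hU hX hY hx hy
    let T : FSubrep R :=
      { U := fun i => (U i).comap (LinearMap.single ℂ (fun i => Fin (d i) → ℂ) i)
        Uinf := if P then ⊤ else ⊥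
        hX := by
          intro i v hv
          have := hX i _ hv
          simpa [FRep.toG] using this
        hY := by
          intro i v hv
          have := hY i _ hv
          simpa [FRep.toG] using this
        hx := by
          intro z hz
          by_cases hP : P
          · have h1 := (U 0).smul_mem z (hx hP)
            simp only [FRep.toG, ← map_smul, smul_eq_mul, mul_one] at h1
            exact h1
          · simp only [hP, ↓reduceIte, Submodule.mem_bot] at hz
            subst hz; simp
        hy := by
          intro v hv
          by_cases hP : P
          · simp [hP]
          · have := hy hP _ hv
            simpa [hP, FRep.toG] using this }
    rcases hR T with ⟨h1, h2⟩ | ⟨h1, h2⟩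
    · left
      constructor
      · intro i
        rw [eq_bot_iff]
        intro v hv
        obtain ⟨u, rfl⟩ := hU i hv
        have : u ∈ T.U i := hv
        rw [h1 i] at this
        simp only [Submodule.mem_bot] at this
        rw [this]; simp
      · intro hP
        simp [T, hP] at h2
    · right
      constructor
      · intro i
        apply le_antisymm (hU i)
        rintro _ ⟨u, rfl⟩
        have : u ∈ T.U i := by rw [h1 i]; trivial
        exact this
      · by_contra hP
        simp [T, hP] at h2
  · intro i
    change Module.finrank ℂ (LinearMap.range (LinearMap.single ℂ (fun i => Fin (d i) → ℂ) i)) = _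
    rw [LinearMap.finrank_range_of_inj (LinearMap.ker_eq_bot.1 (LinearMap.ker_single _ _ _))]
    simp

lemma symm_castMap {ℓ : ℕ} {E : Type} [AddCommGroup E] [Module ℂ E] {S : ZMod ℓ → Submodule ℂ E}
    {d : ZMod ℓ → ℕ} (e : ∀ i, S i ≃ₗ[ℂ] (Fin (d i) → ℂ)) (i : ZMod ℓ) (h : i = 0)
    (v : Fin (d 0) → ℂ) :
    (((e i).symm (castMap d h.symm v) : S i) : E) = ((e 0).symm v : S 0) := by
  subst h; rfl

lemma symm_castMap' {ℓ : ℕ} {E : Type} [AddCommGroup E] [Module ℂ E] {S : ZMod ℓ → Submodule ℂ E}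
    {d : ZMod ℓ → ℕ} (e : ∀ i, S i ≃ₗ[ℂ] (Fin (d i) → ℂ)) (i : ZMod ℓ) (h : i = 0)
    (v : Fin (d i) → ℂ) :
    (((e 0).symm (castMap d h v) : S 0) : E) = ((e i).symm v : S i) := by
  subst h; rfl

def GRep.toF {ℓ : ℕ} {θ : ZMod ℓ → ℂ} {E : Type} [AddCommGroup E] [Module ℂ E]
    (R : GRep ℓ θ E) {d : ZMod ℓ → ℕ} (e : ∀ i, R.S i ≃ₗ[ℂ] (Fin (d i) → ℂ)) : FRep ℓ θ d where
  X i := (e i).toLinearMap ∘ₗ (R.X i).restrict (R.hX i) ∘ₗ (e (i + 1)).symm.toLinearMap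
  Y i := (e (i + 1)).toLinearMap ∘ₗ (R.Y i).restrict (R.hY i) ∘ₗ (e i).symm.toLinearMap
  x := LinearMap.toSpanSingleton ℂ _ (e 0 ⟨R.x, R.hx⟩)
  y := R.y ∘ₗ (R.S 0).subtype ∘ₗ (e 0).symm.toLinearMap
  rel := by
    intro i
    apply LinearMap.ext
    intro v
    apply (e (i + 1)).symm.injective
    apply Subtype.ext
    have h := R.rel i ((e (i + 1)).symm v) ((e (i + 1)).symm v).2
    simp only [LinearMap.add_apply, LinearMap.sub_apply, map_add, map_sub, LinearMap.smul_apply,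
      LinearMap.id_apply, map_smul, Submodule.coe_add, Submodule.coe_sub, Submodule.coe_smul]
    rw [← h]
    congr 1
    · simp
    · by_cases hi : i + 1 = 0
      · simp only [hi, ↓reduceDIte, ↓reduceIte, LinearMap.comp_apply]
        rw [symm_castMap e _ hi]
        simp only [LinearEquiv.coe_coe, LinearMap.toSpanSingleton_apply, map_smul,
          LinearEquiv.symm_apply_apply, Submodule.coe_smul, Submodule.subtype_apply]
        rw [symm_castMap' e _ hi]
      · simp [hi]

lemma GE_to_Eset {ℓ : ℕ} {θ : ZMod ℓ → ℂ} {d : ZMod ℓ → ℕ} (h : GE ℓ θ d) :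
    d ∈ Eset ℓ θ := by
  obtain ⟨E, _, _, _, R, hR, hd⟩ := h
  have e : ∀ i, R.S i ≃ₗ[ℂ] (Fin (d i) → ℂ) := fun i =>
    LinearEquiv.ofFinrankEq _ _ (by rw [hd i]; simp)
  refine ⟨R.toF e, ?_⟩
  intro T
  have hmem : ∀ i (v : R.S i), (v : E) ∈ (T.U i).map ((R.S i).subtype ∘ₗ (e i).symm.toLinearMap)
      ↔ e i v ∈ T.U i := by
    intro i v
    constructor
    · rintro ⟨u, hu, huv⟩
      have : (e i).symm u = v := Subtype.ext huv
      rw [← this]; simpa using hu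
    · intro hv
      exact ⟨e i v, hv, by simp⟩
  have hle : ∀ i, (T.U i).map ((R.S i).subtype ∘ₗ (e i).symm.toLinearMap) ≤ R.S i := by
    rintro i _ ⟨u, hu, rfl⟩
    exact ((e i).symm u).2
  have hdich : T.Uinf = ⊥ ∨ T.Uinf = ⊤ := eq_bot_or_eq_top T.Uinf
  have key := hR (fun i => (T.U i).map ((R.S i).subtype ∘ₗ (e i).symm.toLinearMap)) (T.Uinf = ⊤)
    hle
    (by
      rintro i _ ⟨u, hu, rfl⟩
      have h1 := T.hX i u hu
      exact ⟨_, h1, by simp [GRep.toF]⟩)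
    (by
      rintro i _ ⟨u, hu, rfl⟩
      have h1 := T.hY i u hu
      exact ⟨_, h1, by simp [GRep.toF]⟩)
    (by
      intro hP
      have h1 := T.hx 1 (by rw [hP]; trivial)
      exact ⟨_, h1, by simp [GRep.toF]⟩)
    (by
      rintro hP _ ⟨u, hu, rfl⟩
      have h1 := T.hy u hu
      rw [hdich.resolve_right hP] at h1
      simpa [GRep.toF] using h1)
  rcases key with ⟨h1, h2⟩ | ⟨h1, h2⟩
  · left
    refine ⟨?_, hdich.resolve_right h2⟩
    intro i
    rw [eq_bot_iff]
    intro u hu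
    have : ((e i).symm u : E) ∈ (T.U i).map ((R.S i).subtype ∘ₗ (e i).symm.toLinearMap) := by
      rw [hmem]; simpa using hu
    have h1' := h1 i
    rw [h1'] at this
    simpa using this
  · right
    refine ⟨?_, h2⟩
    intro i
    rw [eq_top_iff]
    intro u _
    have h1' := h1 i
    have : ((e i).symm u : E) ∈ (T.U i).map ((R.S i).subtype ∘ₗ (e i).symm.toLinearMap) := by
      rw [h1']; exact ((e i).symm u).2
    rw [hmem] at this
    simpa using this

section reflection
variable {ℓ : ℕ} {θ : ZMod ℓ → ℂ} {E : Type} [AddCommGroup E] [Module ℂ E]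

/-- incoming map at `j` -/
def GRep.b (R : GRep ℓ θ E) (j : ZMod ℓ) : (E × E × ℂ) →ₗ[ℂ] E :=
  R.X j ∘ₗ LinearMap.fst ℂ _ _ - R.Y (j - 1) ∘ₗ LinearMap.fst ℂ _ _ ∘ₗ LinearMap.snd ℂ _ _
    + LinearMap.toSpanSingleton ℂ _ R.x ∘ₗ LinearMap.snd ℂ _ _ ∘ₗ LinearMap.snd ℂ _ _

/-- outgoing map at `j` -/
def GRep.a (R : GRep ℓ θ E) (j : ZMod ℓ) : E →ₗ[ℂ] (E × E × ℂ) :=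
  (R.Y j).prod ((R.X (j - 1)).prod (if j = 0 then R.y else 0))

/-- the space of neighbours of `j` -/
def nbr (S : ZMod ℓ → Submodule ℂ E) (j : ZMod ℓ) : Submodule ℂ (E × E × ℂ) :=
  (S (j + 1)).prod ((S (j - 1)).prod (if j = 0 then ⊤ else ⊥))

lemma mem_nbr (S : ZMod ℓ → Submodule ℂ E) (j : ZMod ℓ) (w : E × E × ℂ) :
    w ∈ nbr S j ↔ w.1 ∈ S (j + 1) ∧ w.2.1 ∈ S (j - 1) ∧ (j ≠ 0 → w.2.2 = 0) := by
  unfold nbr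
  by_cases h : j = 0
  · simp [h, Submodule.mem_prod]
  · simp [h, Submodule.mem_prod]

lemma GRep.b_apply (R : GRep ℓ θ E) (j : ZMod ℓ) (u v : E) (t : ℂ) :
    R.b j (u, v, t) = R.X j u - R.Y (j - 1) v + t • R.x := by
  simp [GRep.b]

lemma GRep.a_apply (R : GRep ℓ θ E) (j : ZMod ℓ) (z : E) :
    R.a j z = (R.Y j z, R.X (j - 1) z, if j = 0 then R.y z else 0) := by
  by_cases h : j = 0 <;> simp [GRep.a, h]

lemma GRep.hX' (R : GRep ℓ θ E) (j : ZMod ℓ) (v : E) (h : v ∈ R.S j) :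
    R.X (j - 1) v ∈ R.S (j - 1) := R.hX (j - 1) v (by rwa [sub_add_cancel])

lemma GRep.hY' (R : GRep ℓ θ E) (j : ZMod ℓ) (v : E) (h : v ∈ R.S (j - 1)) :
    R.Y (j - 1) v ∈ R.S j := by
  have := R.hY (j - 1) v h
  rwa [sub_add_cancel] at this

lemma GRep.rel' (R : GRep ℓ θ E) (j : ZMod ℓ) (v : E) (h : v ∈ R.S j) :
    R.X j (R.Y j v) - R.Y (j - 1) (R.X (j - 1) v) +
    (if j = 0 then R.y v • R.x else 0) = θ j • v := by
  have := R.rel (j - 1) v (by rwa [sub_add_cancel])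
  rwa [sub_add_cancel] at this

lemma GRep.b_mem (R : GRep ℓ θ E) (j : ZMod ℓ) (w : E × E × ℂ) (h : w ∈ nbr R.S j) :
    R.b j w ∈ R.S j := by
  obtain ⟨u, v, t⟩ := w
  rw [mem_nbr] at h
  obtain ⟨h1, h2, h3⟩ := h
  rw [R.b_apply]
  refine add_mem (sub_mem (R.hX j u h1) (R.hY' j v h2)) ?_
  by_cases hj : j = 0
  · subst hj; exact (R.S 0).smul_mem _ R.hx
  · have : t = 0 := h3 hj
    simp [this]

lemma GRep.a_mem (R : GRep ℓ θ E) (j : ZMod ℓ) (z : E) (h : z ∈ R.S j) :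
    R.a j z ∈ nbr R.S j := by
  rw [mem_nbr, R.a_apply]
  exact ⟨R.hY j z h, R.hX' j z h, fun hj => by simp [hj]⟩

lemma GRep.b_a (R : GRep ℓ θ E) (j : ZMod ℓ) (z : E) (h : z ∈ R.S j) :
    R.b j (R.a j z) = θ j • z := by
  rw [R.a_apply, R.b_apply, ← R.rel' j z h]
  by_cases hj : j = 0 <;> simp [hj]

/-- the reflected incoming map -/
def GRep.b' (R : GRep ℓ θ E) (j : ZMod ℓ) : (E × E × ℂ) →ₗ[ℂ] (E × E × ℂ) :=
  R.a j ∘ₗ R.b j - θ j • LinearMap.id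

lemma GRep.b'_apply (R : GRep ℓ θ E) (j : ZMod ℓ) (w : E × E × ℂ) :
    R.b' j w = R.a j (R.b j w) - θ j • w := rfl

lemma GRep.b'_mem (R : GRep ℓ θ E) (j : ZMod ℓ) (w : E × E × ℂ) (h : w ∈ nbr R.S j) :
    R.b' j w ∈ nbr R.S j ⊓ LinearMap.ker (R.b j) := by
  constructor
  · exact sub_mem (R.a_mem j _ (R.b_mem j w h)) (Submodule.smul_mem _ _ h)
  · change R.b j (R.b' j w) = 0
    rw [R.b'_apply, map_sub, R.b_a j _ (R.b_mem j w h), map_smul, sub_self]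

/-- vertex spaces of the reflected representation -/
def reflS (R : GRep ℓ θ E) (j : ZMod ℓ) (i : ZMod ℓ) : Submodule ℂ (E × (E × E × ℂ)) :=
  if i = j then Submodule.prod ⊥ (nbr R.S j ⊓ LinearMap.ker (R.b j))
  else Submodule.prod (R.S i) ⊥

/-- The reflected representation. -/
def GRep.reflect (hℓ : 2 ≤ ℓ) (R : GRep ℓ θ E) (j : ZMod ℓ) :
    GRep ℓ (sC ℓ j θ) (E × (E × E × ℂ)) where
  S := reflS R j
  X i :=
    if i = j then
      LinearMap.inr ℂ E _ ∘ₗ R.b' j ∘ₗ LinearMap.inl ℂ E _ ∘ₗ LinearMap.fst ℂ E _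
    else if i = j - 1 then
      LinearMap.inl ℂ E _ ∘ₗ LinearMap.fst ℂ E ℂ ∘ₗ LinearMap.snd ℂ E _ ∘ₗ LinearMap.snd ℂ E _
    else LinearMap.inl ℂ E _ ∘ₗ R.X i ∘ₗ LinearMap.fst ℂ E _
  Y i :=
    if i = j then
      LinearMap.inl ℂ E _ ∘ₗ LinearMap.fst ℂ E _ ∘ₗ LinearMap.snd ℂ E _
    else if i = j - 1 then
      - (LinearMap.inr ℂ E _ ∘ₗ R.b' j ∘ₗ LinearMap.inr ℂ E _ ∘ₗ LinearMap.inl ℂ E ℂ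
        ∘ₗ LinearMap.fst ℂ E _)
    else LinearMap.inl ℂ E _ ∘ₗ R.Y i ∘ₗ LinearMap.fst ℂ E _
  x := if j = 0 then (0, R.b' j (0, 0, 1)) else (R.x, 0)
  y := if j = 0 then LinearMap.snd ℂ E ℂ ∘ₗ LinearMap.snd ℂ E _ ∘ₗ LinearMap.snd ℂ E _
    else R.y ∘ₗ LinearMap.fst ℂ E _
  hX := by
    have h1 := zmod_one_ne hℓ
    rintro i ⟨v, w⟩ hv
    by_cases hi : i = j
    · subst hi
      have : ¬ (i + 1 = i) := by simpa using h1
      simp only [reflS, this, ↓reduceIte, Submodule.mem_prod, Submodule.mem_bot] at hv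
      simp only [reflS, ↓reduceIte, Submodule.mem_prod, Submodule.mem_bot]
      refine ⟨by simp, ?_⟩
      apply R.b'_mem
      rw [mem_nbr]
      simp [hv.1]
    · by_cases hi' : i = j - 1
      · subst hi'
        simp only [reflS, sub_add_cancel, ↓reduceIte, Submodule.mem_prod, Submodule.mem_bot] at hv
        have hw := (mem_nbr _ _ _).1 hv.2.1
        simp only [reflS, hi, ↓reduceIte, Submodule.mem_prod, Submodule.mem_bot]
        exact ⟨by simpa using hw.2.1, by simp⟩
      · have : ¬ (i + 1 = j) := fun h2 => hi' (by rw [← h2]; ring)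
        simp only [reflS, this, ↓reduceIte, Submodule.mem_prod, Submodule.mem_bot] at hv
        simp only [reflS, hi, hi', ↓reduceIte, Submodule.mem_prod, Submodule.mem_bot]
        exact ⟨by simpa using R.hX i v hv.1, by simp⟩
  hY := by
    have h1 := zmod_one_ne hℓ
    rintro i ⟨v, w⟩ hv
    by_cases hi : i = j
    · subst hi
      have : ¬ (i + 1 = i) := by simpa using h1
      simp only [reflS, ↓reduceIte, Submodule.mem_prod, Submodule.mem_bot] at hv
      simp only [reflS, this, ↓reduceIte, Submodule.mem_prod, Submodule.mem_bot]
      have hw := (mem_nbr _ _ _).1 hv.2.1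
      exact ⟨by simpa using hw.1, by simp⟩
    · by_cases hi' : i = j - 1
      · subst hi'
        simp only [reflS, hi, ↓reduceIte, Submodule.mem_prod, Submodule.mem_bot] at hv
        simp only [reflS, hi, sub_add_cancel, ↓reduceIte, Submodule.mem_prod, Submodule.mem_bot]
        refine ⟨by simp, ?_⟩
        apply neg_mem
        apply R.b'_mem
        rw [mem_nbr]
        simp [hv.1]
      · have : ¬ (i + 1 = j) := fun h2 => hi' (by rw [← h2]; ring)
        simp only [reflS, hi, ↓reduceIte, Submodule.mem_prod, Submodule.mem_bot] at hv
        simp only [reflS, hi, hi', this, ↓reduceIte, Submodule.mem_prod, Submodule.mem_bot]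
        exact ⟨by simpa using R.hY i v hv.1, by simp⟩
  hx := by
    by_cases hj : j = 0
    · subst hj
      simp only [reflS, ↓reduceIte, Submodule.mem_prod, Submodule.mem_bot, true_and]
      apply R.b'_mem
      rw [mem_nbr]
      simp
    · simp [reflS, hj, Ne.symm hj, R.hx]
  rel := by
    have h1 := zmod_one_ne hℓ
    intro i
    obtain ⟨k, rfl⟩ : ∃ k, i = k - 1 := ⟨i + 1, by ring⟩
    rw [sub_add_cancel]
    rintro ⟨v, w⟩ hv
    by_cases hk : k = j
    · subst hk
      have hk1 : ¬ (k - 1 = k) := by intro h; apply h1; linear_combination -h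
      simp only [reflS, ↓reduceIte, Submodule.mem_prod, Submodule.mem_bot] at hv
      obtain ⟨rfl, hw, hb⟩ := hv
      obtain ⟨u, v, t⟩ := w
      replace hb : R.b k (u, v, t) = 0 := hb
      have ht := ((mem_nbr _ _ _).1 hw).2.2
      have hsum : R.b' k (u, (0 : E × ℂ)) + R.b' k (0, v, 0) + R.b' k (0, 0, t) = - θ k • (u, v, t) := by
        rw [← map_add, ← map_add, R.b'_apply]
        have : ((u, (0 : E × ℂ)) + (0, v, 0) + (0, 0, t) : E × E × ℂ) = (u, v, t) := by simp
        rw [this, hb, map_zero, zero_sub, neg_smul]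
      have hs : sC ℓ k θ k = - θ k := by simp [sC]
      simp only [↓reduceIte, hk1, LinearMap.comp_apply, LinearMap.fst_apply, LinearMap.snd_apply,
        LinearMap.inl_apply, LinearMap.inr_apply, LinearMap.neg_apply]
      rw [hs]
      have ht' : R.b' k (0, 0, t) = if k = 0 then t • R.b' k (0, 0, 1) else 0 := by
        split_ifs with h0
        · rw [← map_smul]; simp
        · have : t = 0 := ht h0
          rw [this]; exact map_zero _
      rw [ht'] at hsum
      apply Prod.ext
      · by_cases h0 : k = 0 <;> simp [h0]
      · by_cases h0 : k = 0
        · simp only [h0, ↓reduceIte, LinearMap.comp_apply] at hsum ⊢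
          simpa using hsum
        · simp only [h0, ↓reduceIte] at hsum ⊢
          simpa using hsum
    · have hk1 : ¬ (k - 1 = j - 1) := fun h => hk (by linear_combination h)
      simp only [reflS, hk, ↓reduceIte, Submodule.mem_prod, Submodule.mem_bot] at hv
      obtain ⟨hv, rfl⟩ := hv
      replace hv : v ∈ R.S k := hv
      have hrel := R.rel' k v hv
      have hs : sC ℓ j θ k = θ k + ((if k = j - 1 then 1 else 0) + (if k = j + 1 then 1 else 0) : ℂ)
          * θ j := by simp [sC, hk]
      have e1 : ∀ A B : (E × (E × E × ℂ)) →ₗ[ℂ] (E × (E × E × ℂ)),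
          A = (if k = j - 1 then
            LinearMap.inl ℂ E _ ∘ₗ LinearMap.fst ℂ E ℂ ∘ₗ LinearMap.snd ℂ E _ ∘ₗ LinearMap.snd ℂ E _
            else LinearMap.inl ℂ E _ ∘ₗ R.X k ∘ₗ LinearMap.fst ℂ E _) →
          B = (if k = j - 1 then
            - (LinearMap.inr ℂ E _ ∘ₗ R.b' j ∘ₗ LinearMap.inr ℂ E _ ∘ₗ LinearMap.inl ℂ E ℂ
              ∘ₗ LinearMap.fst ℂ E _)
            else LinearMap.inl ℂ E _ ∘ₗ R.Y k ∘ₗ LinearMap.fst ℂ E _) →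
          A (B (v, 0)) = (R.X k (R.Y k v) + (if k = j - 1 then (1 : ℂ) else 0) • θ j • v, 0) := by
        rintro A B rfl rfl
        by_cases h2 : k = j - 1
        · subst h2
          simp [R.b'_apply, R.b_apply, R.a_apply, add_comm]
        · simp [h2]
      have e2 : ∀ A B : (E × (E × E × ℂ)) →ₗ[ℂ] (E × (E × E × ℂ)),
          A = (if k - 1 = j then
            LinearMap.inl ℂ E _ ∘ₗ LinearMap.fst ℂ E _ ∘ₗ LinearMap.snd ℂ E _
            else LinearMap.inl ℂ E _ ∘ₗ R.Y (k - 1) ∘ₗ LinearMap.fst ℂ E _) →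
          B = (if k - 1 = j then
            LinearMap.inr ℂ E _ ∘ₗ R.b' j ∘ₗ LinearMap.inl ℂ E _ ∘ₗ LinearMap.fst ℂ E _
            else LinearMap.inl ℂ E _ ∘ₗ R.X (k - 1) ∘ₗ LinearMap.fst ℂ E _) →
          A (B (v, 0)) = (R.Y (k - 1) (R.X (k - 1) v)
            - (if k = j + 1 then (1 : ℂ) else 0) • θ j • v, 0) := by
        rintro A B rfl rfl
        by_cases h2 : k - 1 = j
        · subst h2
          simp [R.b'_apply, R.b_apply, R.a_apply]
        · have h3 : ¬ (k = j + 1) := fun h => h2 (by rw [h]; ring)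
          simp [h2, h3]
      rw [e1 _ _ (by simp [hk]) (by simp [hk]), e2 _ _ (by simp [hk1]) (by simp [hk1]), hs]
      have e3 : (if k = 0 then
          (if j = 0 then LinearMap.snd ℂ E ℂ ∘ₗ LinearMap.snd ℂ E _ ∘ₗ LinearMap.snd ℂ E _
          else R.y ∘ₗ LinearMap.fst ℂ E _) (v, (0 : E × E × ℂ)) •
            (if j = 0 then ((0 : E), R.b' j (0, 0, 1)) else (R.x, 0)) else 0)
          = ((if k = 0 then R.y v • R.x else 0 : E), (0 : E × E × ℂ)) := by
        by_cases h0 : k = 0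
        · subst h0
          simp [Ne.symm hk]
        · simp only [h0, ↓reduceIte]; rfl
      rw [e3]
      apply Prod.ext
      · simp only [Prod.fst_add, Prod.fst_sub, Prod.smul_fst]
        rw [add_smul, ← hrel, add_mul, add_smul, mul_smul, mul_smul]
        abel
      · simp

end reflection

section
variable {ℓ : ℕ} {θ : ZMod ℓ → ℂ} {E : Type} [AddCommGroup E] [Module ℂ E]

def prodEquivSub {E F : Type} [AddCommGroup E] [Module ℂ E] [AddCommGroup F] [Module ℂ F]
    (p : Submodule ℂ E) (q : Submodule ℂ F) : (p.prod q) ≃ₗ[ℂ] p × q where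
  toFun v := (⟨v.1.1, v.2.1⟩, ⟨v.1.2, v.2.2⟩)
  invFun v := ⟨(v.1.1, v.2.1), v.1.2, v.2.2⟩
  map_add' _ _ := rfl
  map_smul' _ _ := rfl
  left_inv _ := rfl
  right_inv _ := rfl

lemma finrank_prodSub {E F : Type} [AddCommGroup E] [Module ℂ E] [AddCommGroup F] [Module ℂ F]
    [FiniteDimensional ℂ E] [FiniteDimensional ℂ F]
    (p : Submodule ℂ E) (q : Submodule ℂ F) :
    Module.finrank ℂ (p.prod q) = Module.finrank ℂ p + Module.finrank ℂ q := by
  rw [(prodEquivSub p q).finrank_eq, Module.finrank_prod]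

lemma finrank_nbr [FiniteDimensional ℂ E] (S : ZMod ℓ → Submodule ℂ E) (j : ZMod ℓ) :
    Module.finrank ℂ (nbr S j) = Module.finrank ℂ (S (j + 1)) + (Module.finrank ℂ (S (j - 1)) +
      if j = 0 then 1 else 0) := by
  unfold nbr
  rw [finrank_prodSub, finrank_prodSub]
  by_cases h : j = 0
  · rw [if_pos h, if_pos h, finrank_top, Module.finrank_self]
  · rw [if_neg h, if_neg h, finrank_bot]

/-- `b` restricted. -/
def GRep.bR (R : GRep ℓ θ E) (j : ZMod ℓ) : nbr R.S j →ₗ[ℂ] R.S j :=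
  (R.b j).restrict (R.b_mem j)

def GRep.aR (R : GRep ℓ θ E) (j : ZMod ℓ) : R.S j →ₗ[ℂ] nbr R.S j :=
  (R.a j).restrict (R.a_mem j)

lemma finrank_inf_ker [FiniteDimensional ℂ E] (R : GRep ℓ θ E) (j : ZMod ℓ)
    (hs : Function.Surjective (R.bR j)) :
    Module.finrank ℂ (R.S j) + Module.finrank ℂ ↥(nbr R.S j ⊓ LinearMap.ker (R.b j))
      = Module.finrank ℂ (nbr R.S j) := by
  rw [← LinearMap.finrank_range_add_finrank_ker (R.bR j), LinearMap.range_eq_top.2 hs, finrank_top]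
  congr 1
  have : nbr R.S j ⊓ LinearMap.ker (R.b j)
      = (LinearMap.ker (R.bR j)).map (nbr R.S j).subtype := by
    ext w
    constructor
    · rintro ⟨h1, h2⟩
      exact ⟨⟨w, h1⟩, Subtype.ext h2, rfl⟩
    · rintro ⟨⟨w', h1⟩, h2, rfl⟩
      exact ⟨h1, congrArg Subtype.val h2⟩
  rw [this, Submodule.finrank_map_subtype_eq]

lemma GRep.bR_surj (R : GRep ℓ θ E) (j : ZMod ℓ) (hj : θ j ≠ 0) :
    Function.Surjective (R.bR j) := by
  intro z
  refine ⟨(θ j)⁻¹ • R.aR j z, ?_⟩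
  rw [map_smul]
  apply Subtype.ext
  change (θ j)⁻¹ • R.b j (R.a j z) = z
  rw [R.b_a j z z.2, smul_smul, inv_mul_cancel₀ hj, one_smul]

lemma GRep.reflect_simple (hℓ : 2 ≤ ℓ) (R : GRep ℓ θ E) (j : ZMod ℓ) (hj : θ j ≠ 0)
    (hR : GSimple R) : GSimple (R.reflect hℓ j) := by
  have h1 := zmod_one_ne hℓ
  have hj1 : ¬ (j + 1 = j) := by simpa using h1
  have hj2 : ¬ (j - 1 = j) := by intro h; apply h1; linear_combination -h
  intro U' P hU hX hY hx hy
  -- elements of U'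
  have hUj : ∀ v ∈ U' j, v.1 = 0 ∧ v.2 ∈ nbr R.S j ∧ R.b j v.2 = 0 := by
    intro v hv
    have := hU j hv
    simp only [GRep.reflect, reflS, ↓reduceIte, Submodule.mem_prod, Submodule.mem_bot] at this
    exact ⟨this.1, this.2.1, this.2.2⟩
  have hUi : ∀ i, i ≠ j → ∀ v ∈ U' i, v.1 ∈ R.S i ∧ v.2 = 0 := by
    intro i hi v hv
    have := hU i hv
    simp only [GRep.reflect, reflS, hi, ↓reduceIte, Submodule.mem_prod, Submodule.mem_bot] at this
    exact this
  let V : ZMod ℓ → Submodule ℂ E := fun i => (U' i).comap (LinearMap.inl ℂ E _)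
  let B : Submodule ℂ (E × E × ℂ) :=
    (V (j + 1)).prod ((V (j - 1)).prod (⨆ _ : (j = 0 ∧ P), (⊤ : Submodule ℂ ℂ)))
  have hB : ∀ w, w ∈ B ↔ w.1 ∈ V (j + 1) ∧ w.2.1 ∈ V (j - 1) ∧ (¬ (j = 0 ∧ P) → w.2.2 = 0) := by
    intro w
    by_cases h : j = 0 ∧ P
    · simp [B, h, Submodule.mem_prod]
    · simp only [B, Submodule.mem_prod, h, iSup_false, Submodule.mem_bot]
      simp
  have hVS : ∀ i, i ≠ j → V i ≤ R.S i := fun i hi v hv => (hUi i hi _ hv).1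
  have hBn : B ≤ nbr R.S j := by
    intro w hw
    rw [hB] at hw
    rw [mem_nbr]
    exact ⟨hVS _ hj1 hw.1, hVS _ hj2 hw.2.1, fun h => hw.2.2 (fun h' => h h'.1)⟩
  -- b' maps B into U' j
  have hb'B : ∀ w ∈ B, ((0 : E), R.b' j w) ∈ U' j := by
    rintro ⟨u, v, t⟩ hw
    rw [hB] at hw
    obtain ⟨hu, hv, ht⟩ := hw
    have e1 : ((0 : E), R.b' j (u, (0 : E × ℂ))) ∈ U' j := by
      have := hX j _ hu
      simpa [GRep.reflect] using this
    have e2 : ((0 : E), R.b' j (0, v, 0)) ∈ U' j := by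
      have := hY (j - 1) _ hv
      simp only [GRep.reflect, hj2, ↓reduceIte, sub_add_cancel] at this
      have := neg_mem this
      simpa using this
    have e3 : ((0 : E), R.b' j (0, 0, t)) ∈ U' j := by
      by_cases h : j = 0 ∧ P
      · obtain ⟨rfl, hP⟩ := h
        have h2 := (U' 0).smul_mem t (hx hP)
        simp only [GRep.reflect, ↓reduceIte, Prod.smul_mk, ← map_smul] at h2
        simpa using h2
      · have : t = 0 := ht h
        subst this
        have h0 : R.b' j (0, 0, 0) = 0 := map_zero _
        rw [h0]
        exact zero_mem _
    have := add_mem (add_mem e1 e2) e3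
    simp only [Prod.mk_add_mk, add_zero, ← map_add] at this
    simpa using this
  -- elements of U' j have second component in B
  have hUB : ∀ v ∈ U' j, v.2 ∈ B := by
    intro v hv
    obtain ⟨hv0, hv1, hv2⟩ := hUj v hv
    rw [hB]
    refine ⟨?_, ?_, ?_⟩
    · have := hY j v hv
      change (_, (0 : E × E × ℂ)) ∈ U' _
      simpa [GRep.reflect] using this
    · have := hX (j - 1) v (by rwa [sub_add_cancel])
      change (_, (0 : E × E × ℂ)) ∈ U' _
      simpa [GRep.reflect, hj2] using this
    · intro h
      by_cases h0 : j = 0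
      · subst h0
        have := hy (fun hP => h ⟨rfl, hP⟩) v hv
        simpa [GRep.reflect] using this
      · exact ((mem_nbr _ _ _).1 hv1).2.2 h0
  -- a b maps B into B
  have habB : ∀ w ∈ B, R.a j (R.b j w) ∈ B := by
    intro w hw
    have e1 := hUB _ (hb'B w hw)
    have e2 := add_mem e1 (B.smul_mem (θ j) hw)
    simpa [R.b'_apply] using e2
  have key := hR (fun i => if i = j then B.map (R.b j) else V i) P
    (by
      intro i
      by_cases hi : i = j
      · subst hi
        simp only [↓reduceIte]
        rintro _ ⟨w, hw, rfl⟩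
        exact R.b_mem _ _ (hBn hw)
      · simp only [hi, ↓reduceIte]
        exact hVS i hi)
    (by
      intro i v hv
      by_cases hi : i = j
      · subst hi
        simp only [↓reduceIte, hj1] at hv ⊢
        refine ⟨(v, 0), ?_, by rw [show (0 : E × ℂ) = (0, 0) from rfl, R.b_apply]; simp⟩
        apply (hB _).2
        simp [hv]
      · by_cases hi' : i = j - 1
        · subst hi'
          simp only [sub_add_cancel, ↓reduceIte, hj2] at hv ⊢
          obtain ⟨w, hw, rfl⟩ := hv
          have := habB w hw
          rw [R.a_apply, hB] at this
          exact this.2.1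
        · have h3 : ¬ (i + 1 = j) := fun h2 => hi' (by rw [← h2]; ring)
          simp only [h3, hi, ↓reduceIte] at hv ⊢
          have := hX i _ hv
          change (_, (0 : E × E × ℂ)) ∈ U' _
          simpa [GRep.reflect, hi, hi'] using this)
    (by
      intro i v hv
      by_cases hi : i = j
      · subst hi
        simp only [↓reduceIte, hj1] at hv ⊢
        obtain ⟨w, hw, rfl⟩ := hv
        have := habB w hw
        rw [R.a_apply, hB] at this
        exact this.1
      · by_cases hi' : i = j - 1
        · subst hi'
          simp only [sub_add_cancel, ↓reduceIte, hj2] at hv ⊢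
          refine ⟨(0, -v, 0), ?_, by rw [R.b_apply]; simp⟩
          apply (hB _).2
          have := neg_mem hv
          simp only [zero_mem, implies_true, and_true, true_and]
          exact this
        · have h3 : ¬ (i + 1 = j) := fun h2 => hi' (by rw [← h2]; ring)
          simp only [h3, hi, ↓reduceIte] at hv ⊢
          have := hY i _ hv
          change (_, (0 : E × E × ℂ)) ∈ U' _
          simpa [GRep.reflect, hi, hi'] using this)
    (by
      intro hP
      by_cases h0 : 0 = j
      · subst h0
        simp only [↓reduceIte]
        refine ⟨(0, 0, 1), ?_, by rw [R.b_apply]; simp⟩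
        apply (hB _).2
        simp [hP]
      · have h0' : ¬ (j = 0) := fun h => h0 h.symm
        simp only [h0, ↓reduceIte]
        have := hx hP
        change (_, (0 : E × E × ℂ)) ∈ U' _
        simpa [GRep.reflect, h0'] using this)
    (by
      intro hP v hv
      by_cases h0 : 0 = j
      · subst h0
        simp only [↓reduceIte] at hv
        obtain ⟨w, hw, rfl⟩ := hv
        have := habB w hw
        rw [R.a_apply, hB] at this
        simpa using this.2.2 (fun h => hP h.2)
      · have h0' : ¬ (j = 0) := fun h => h0 h.symm
        simp only [h0, ↓reduceIte] at hv
        have := hy hP _ hv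
        simpa [GRep.reflect, h0'] using this)
  rcases key with ⟨h2, hP⟩ | ⟨h2, hP⟩
  · left
    refine ⟨?_, hP⟩
    have hV0 : ∀ i, i ≠ j → V i = ⊥ := by
      intro i hi
      have := h2 i
      simpa only [hi, ↓reduceIte] using this
    intro i
    rw [eq_bot_iff]
    intro v hv
    by_cases hi : i = j
    · subst hi
      have hb := (hB _).1 (hUB v hv)
      rw [hV0 _ hj1, hV0 _ hj2] at hb
      obtain ⟨hb1, hb2, hb3⟩ := hb
      have hb3' := hb3 (fun h => hP h.2)
      obtain ⟨v0, v1, v2, v3⟩ := v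
      have hv0 := (hUj _ hv).1
      simp only [Submodule.mem_bot] at hb1 hb2 hb3' hv0 ⊢
      rw [hb1, hb2, hb3', hv0]; rfl
    · obtain ⟨v0, w⟩ := v
      have hw := (hUi i hi _ hv).2
      simp only at hw
      subst hw
      have : v0 ∈ V i := hv
      rw [hV0 i hi] at this
      simp only [Submodule.mem_bot] at this ⊢
      rw [this]; rfl
  · right
    refine ⟨?_, hP⟩
    have hV1 : ∀ i, i ≠ j → V i = R.S i := by
      intro i hi
      have := h2 i
      simpa only [hi, ↓reduceIte] using this
    intro i
    apply le_antisymm (hU i)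
    rintro ⟨v0, w⟩ hv
    by_cases hi : i = j
    · subst hi
      simp only [GRep.reflect, reflS, ↓reduceIte, Submodule.mem_prod, Submodule.mem_bot] at hv
      obtain ⟨rfl, hw1, hw2⟩ := hv
      replace hw2 : R.b i w = 0 := hw2
      have hwB : w ∈ B := by
        rw [hB, hV1 _ hj1, hV1 _ hj2]
        replace hw1 : w ∈ nbr R.S i := hw1
        rw [mem_nbr] at hw1
        exact ⟨hw1.1, hw1.2.1, fun h => hw1.2.2 (fun h' => h ⟨h', hP⟩)⟩
      have h3 := hb'B w hwB
      rw [R.b'_apply, hw2, map_zero, zero_sub] at h3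
      have h4 := (U' i).smul_mem (-(θ i)⁻¹) h3
      simpa [smul_smul, hj] using h4
    · simp only [GRep.reflect, reflS, hi, ↓reduceIte, Submodule.mem_prod, Submodule.mem_bot] at hv
      obtain ⟨hv, rfl⟩ := hv
      have : v0 ∈ V i := by rw [hV1 i hi]; exact hv
      exact this

end

lemma GE.reflect {ℓ : ℕ} (hℓ : 2 ≤ ℓ) {θ : ZMod ℓ → ℂ} {d : ZMod ℓ → ℕ}
    (h : GE ℓ θ d) (j : ZMod ℓ) (hj : θ j ≠ 0) :
    ∃ d' : ZMod ℓ → ℕ, GE ℓ (sC ℓ j θ) d' ∧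
      (fun i => (d' i : ℤ)) = sInt ℓ j (fun i => (d i : ℤ)) := by
  obtain ⟨E, _, _, _, R, hR, hd⟩ := h
  refine ⟨fun i => Module.finrank ℂ ((R.reflect hℓ j).S i),
    ⟨_, _, _, inferInstance, R.reflect hℓ j, R.reflect_simple hℓ j hj hR, fun i => rfl⟩, ?_⟩
  funext i
  unfold sInt
  by_cases hi : i = j
  · subst hi
    have h1 := finrank_inf_ker R i (R.bR_surj i hj)
    have h2 := finrank_nbr R.S i
    have hS : (R.reflect hℓ i).S i = Submodule.prod ⊥ (nbr R.S i ⊓ LinearMap.ker (R.b i)) := by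
      simp [GRep.reflect, reflS]
    simp only [↓reduceIte]
    rw [hS, finrank_prodSub, finrank_bot, ← hd, ← hd, ← hd]
    split_ifs at h2 ⊢ <;> push_cast <;> omega
  · have hS : (R.reflect hℓ j).S i = Submodule.prod (R.S i) ⊥ := by
      simp [GRep.reflect, reflS, hi]
    simp only [hi, ↓reduceIte]
    rw [hS, finrank_prodSub, finrank_bot, hd]; simp

lemma GE.pr_nonneg {ℓ : ℕ} (hℓ : 2 ≤ ℓ) {θ : ZMod ℓ → ℂ} {d : ZMod ℓ → ℕ}
    (h : GE ℓ θ d) (j : ZMod ℓ) (hj : θ j = 0) : 0 ≤ pr (fun i => (d i : ℤ)) j := by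
  have h1 := zmod_one_ne hℓ
  have hj1 : ¬ (j + 1 = j) := by simpa using h1
  have hj2 : ¬ (j - 1 = j) := by intro h; apply h1; linear_combination -h
  obtain ⟨E, _, _, _, R, hR, hd⟩ := h
  -- injectivity of a
  have hinj : ∀ z ∈ R.S j, R.a j z = 0 → z = 0 := by
    have key := hR (fun i => if i = j then R.S j ⊓ LinearMap.ker (R.a j) else ⊥) False
      (by
        intro i
        by_cases hi : i = j
        · subst hi; simp
        · simp [hi])
      (by
        intro i v hv
        by_cases hi : i + 1 = j
        · obtain rfl : i = j - 1 := by rw [← hi]; ring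
          simp only [sub_add_cancel, ↓reduceIte, hj2] at hv ⊢
          have h2 : R.a j v = 0 := hv.2
          rw [R.a_apply] at h2
          simp only [Prod.mk_eq_zero] at h2
          rw [h2.2.1]; exact zero_mem _
        · simp only [hi, ↓reduceIte, Submodule.mem_bot] at hv
          rw [hv, map_zero]; exact zero_mem _)
      (by
        intro i v hv
        by_cases hi : i = j
        · subst hi
          simp only [↓reduceIte, hj1] at hv ⊢
          have h2 : R.a i v = 0 := hv.2
          rw [R.a_apply] at h2
          simp only [Prod.mk_eq_zero] at h2
          rw [h2.1]; exact zero_mem _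
        · simp only [hi, ↓reduceIte, Submodule.mem_bot] at hv
          rw [hv, map_zero]; exact zero_mem _)
      (by simp)
      (by
        intro _ v hv
        by_cases hi : 0 = j
        · subst hi
          simp only [↓reduceIte] at hv
          have h2 : R.a 0 v = 0 := hv.2
          rw [R.a_apply] at h2
          simp only [Prod.mk_eq_zero, ↓reduceIte] at h2
          exact h2.2.2
        · simp only [hi, ↓reduceIte, Submodule.mem_bot] at hv
          rw [hv, map_zero])
    rcases key with ⟨h2, _⟩ | ⟨_, h2⟩
    · intro z hz ha
      have h3 := h2 j
      simp only [↓reduceIte] at h3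
      have : z ∈ R.S j ⊓ LinearMap.ker (R.a j) := ⟨hz, ha⟩
      rw [h3] at this
      simpa using this
    · exact h2.elim
  have hsurj : Function.Surjective (R.bR j) := by
    have key := hR (fun i => if i = j then (nbr R.S j).map (R.b j) else R.S i) True
      (by
        intro i
        by_cases hi : i = j
        · subst hi
          simp only [↓reduceIte]
          rintro _ ⟨w, hw, rfl⟩
          exact R.b_mem _ _ hw
        · simp [hi])
      (by
        intro i v hv
        by_cases hi : i = j
        · subst hi
          simp only [↓reduceIte, hj1] at hv ⊢
          refine ⟨(v, 0, 0), ?_, by rw [R.b_apply]; simp⟩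
          apply (mem_nbr _ _ _).2
          simp [hv]
        · simp only [hi, ↓reduceIte] at hv ⊢
          apply R.hX
          by_cases hi' : i + 1 = j
          · simp only [hi', ↓reduceIte] at hv ⊢
            obtain ⟨w, hw, rfl⟩ := hv
            exact R.b_mem _ _ hw
          · simpa [hi'] using hv)
      (by
        intro i v hv
        by_cases hi : i + 1 = j
        · obtain rfl : i = j - 1 := by rw [← hi]; ring
          simp only [sub_add_cancel, ↓reduceIte, hj2] at hv ⊢
          refine ⟨(0, -v, 0), ?_, by rw [R.b_apply]; simp⟩
          apply (mem_nbr _ _ _).2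
          simp [hv]
        · simp only [hi, ↓reduceIte] at hv ⊢
          apply R.hY
          by_cases hi' : i = j
          · subst hi'
            simp only [↓reduceIte] at hv ⊢
            obtain ⟨w, hw, rfl⟩ := hv
            exact R.b_mem _ _ hw
          · simpa [hi'] using hv)
      (by
        intro _
        by_cases hi : 0 = j
        · subst hi
          simp only [↓reduceIte]
          refine ⟨(0, 0, 1), ?_, by rw [R.b_apply]; simp⟩
          apply (mem_nbr _ _ _).2
          simp
        · simp only [hi, ↓reduceIte]
          exact R.hx)
      (by simp)
    rcases key with ⟨_, h2⟩ | ⟨h2, _⟩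
    · exact absurd trivial h2
    · intro z
      have h3 := h2 j
      simp only [↓reduceIte] at h3
      have hz : (z : E) ∈ (nbr R.S j).map (R.b j) := by rw [h3]; exact z.2
      obtain ⟨w, hw, hwz⟩ := hz
      exact ⟨⟨w, hw⟩, Subtype.ext hwz⟩
  have e1 := finrank_inf_ker R j hsurj
  have e2 := finrank_nbr R.S j
  have e3 : Module.finrank ℂ (R.S j) ≤
      Module.finrank ℂ ↥(nbr R.S j ⊓ LinearMap.ker (R.b j)) := by
    have hm : ∀ z ∈ R.S j, R.a j z ∈ nbr R.S j ⊓ LinearMap.ker (R.b j) := by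
      intro z hz
      refine ⟨R.a_mem j z hz, ?_⟩
      change R.b j (R.a j z) = 0
      rw [R.b_a j z hz, hj, zero_smul]
    apply LinearMap.finrank_le_finrank_of_injective (f := (R.a j).restrict hm)
    rw [injective_iff_map_eq_zero]
    intro z hz
    apply Subtype.ext
    exact hinj z z.2 (congrArg Subtype.val hz)
  unfold pr
  rw [hd, hd] at e2
  rw [hd] at e1 e3
  split_ifs at e2 ⊢ <;> push_cast <;> omega

/-! ### The base case -/

section base

def bT (r : ℕ) : (Fin r → ℂ) →ₗ[ℂ] (Fin r → ℂ) where
  toFun v := fun k => ((k : ℕ) + 1 : ℂ) * v k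
  map_add' u v := by funext k; simp [mul_add]
  map_smul' c v := by funext k; simp; ring

lemma bT_apply (r : ℕ) (v : Fin r → ℂ) (k : Fin r) : bT r v k = ((k : ℕ) + 1 : ℂ) * v k := rfl

noncomputable def bz (r : ℕ) (c : ℂ) (a b : Fin r) : ℂ :=
  if a = b then 0 else -c / (((a : ℕ) : ℂ) - ((b : ℕ) : ℂ))

noncomputable def bZ (r : ℕ) (c : ℂ) : (Fin r → ℂ) →ₗ[ℂ] (Fin r → ℂ) where
  toFun v := fun a => ∑ b, bz r c a b * v b
  map_add' u v := by funext k; simp [mul_add, Finset.sum_add_distrib]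
  map_smul' e v := by
    funext k
    simp only [Pi.smul_apply, smul_eq_mul, RingHom.id_apply, Finset.mul_sum]
    exact Finset.sum_congr rfl (fun _ _ => by ring)

lemma bZ_apply (r : ℕ) (c : ℂ) (v : Fin r → ℂ) (a : Fin r) :
    bZ r c v a = ∑ b, bz r c a b * v b := rfl

def byf (r : ℕ) (c : ℂ) : (Fin r → ℂ) →ₗ[ℂ] ℂ where
  toFun v := c * ∑ a, v a
  map_add' u v := by simp [Finset.sum_add_distrib, mul_add]
  map_smul' e v := by
    simp only [Pi.smul_apply, smul_eq_mul, RingHom.id_apply, ← Finset.mul_sum]; ring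

lemma fin_sub_ne {r : ℕ} {a b : Fin r} (h : a ≠ b) : ((a : ℕ) : ℂ) - ((b : ℕ) : ℂ) ≠ 0 := by
  rw [sub_ne_zero]
  intro h2
  exact h (Fin.ext (Nat.cast_injective h2))

lemma base_comm (r : ℕ) (c : ℂ) (v : Fin r → ℂ) :
    bT r (bZ r c v) - bZ r c (bT r v) + byf r c v • (fun _ => (1 : ℂ)) = c • v := by
  funext a
  simp only [Pi.add_apply, Pi.sub_apply, Pi.smul_apply, smul_eq_mul, bT_apply, bZ_apply, mul_one]
  change _ + c * ∑ a, v a = _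
  rw [Finset.mul_sum, Finset.mul_sum, ← Finset.sum_sub_distrib, ← Finset.sum_add_distrib]
  rw [Finset.sum_eq_single a]
  · simp [bz]
  · intro b _ hb
    have h := fin_sub_ne hb.symm
    simp only [bz, hb.symm, ↓reduceIte]
    field_simp
    ring
  · simp

def bs {ℓ : ℕ} (θ : ZMod ℓ → ℂ) (k : ZMod ℓ) : ℂ := ∑ m ∈ Finset.range (k.val + 1), θ (m : ZMod ℓ)

lemma bs_zero {ℓ : ℕ} (θ : ZMod ℓ → ℂ) : bs θ 0 = θ 0 := by simp [bs]

lemma bs_neg_one {ℓ : ℕ} [NeZero ℓ] (hℓ : 2 ≤ ℓ) (θ : ZMod ℓ → ℂ) : bs θ (-1) = ∑ i, θ i := by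
  rw [sum_zmod_range]
  obtain ⟨n, rfl⟩ : ∃ n, ℓ = n + 1 := ⟨ℓ - 1, by omega⟩
  unfold bs
  rw [ZMod.val_neg_one]

lemma bs_succ {ℓ : ℕ} [NeZero ℓ] (hℓ : 2 ≤ ℓ) (θ : ZMod ℓ → ℂ) (i : ZMod ℓ) (hi : i + 1 ≠ 0) :
    bs θ (i + 1) = bs θ i + θ (i + 1) := by
  have : Fact (1 < ℓ) := ⟨by omega⟩
  have h1 : (i + 1).val = i.val + 1 := by
    have h2 : i.val + 1 < ℓ := by
      rcases lt_or_eq_of_le (Nat.succ_le_of_lt i.val_lt) with h | h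
      · exact h
      · exfalso; apply hi
        have h3 : ((i.val + 1 : ℕ) : ZMod ℓ) = ((ℓ : ℕ) : ZMod ℓ) := congrArg _ h
        simpa using h3
    rw [ZMod.val_add_of_lt] <;> rw [ZMod.val_one] 
    exact h2
  unfold bs
  rw [h1, Finset.sum_range_succ]
  congr 1
  simp

noncomputable def baseRep {ℓ : ℕ} [NeZero ℓ] (hℓ : 2 ≤ ℓ) (θ : ZMod ℓ → ℂ) (r : ℕ) :
    GRep ℓ θ (Fin r → ℂ) where
  S _ := ⊤
  X i := if i + 1 = 0 then bT r else LinearMap.id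
  Y i := if i + 1 = 0 then bZ r (∑ i, θ i)
    else bT r ∘ₗ bZ r (∑ i, θ i) + (bs θ i - ∑ i, θ i) • LinearMap.id
  x := fun _ => 1
  y := byf r (∑ i, θ i)
  hX _ _ _ := trivial
  hY _ _ _ := trivial
  hx := trivial
  rel := by
    intro i v _
    have h1 := zmod_one_ne hℓ
    by_cases h0 : i + 1 = 0
    · have h2 : ¬ (i + 1 + 1 = 0) := by rw [h0, zero_add]; exact h1
      have := base_comm r (∑ i, θ i) v
      simp only [h0, ↓reduceIte, bs_zero]
      simp only [zero_add, h1, ↓reduceIte, LinearMap.id_apply, LinearMap.add_apply,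
        LinearMap.comp_apply, LinearMap.smul_apply]
      rw [sub_smul, ← this]
      abel
    · have hs := bs_succ hℓ θ i h0
      by_cases h2 : i + 1 + 1 = 0
      · have h3 : i + 1 = -1 := by linear_combination h2
        have h4 := bs_neg_one hℓ θ
        rw [← h3, hs] at h4
        simp only [h0, h2, ↓reduceIte, LinearMap.id_apply, LinearMap.add_apply,
          LinearMap.comp_apply, LinearMap.smul_apply]
        rw [← h4, sub_smul, add_smul]
        abel
      · simp only [h0, h2, ↓reduceIte, LinearMap.id_apply, LinearMap.add_apply,
          LinearMap.comp_apply, LinearMap.smul_apply]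
        rw [hs, sub_smul, sub_smul, add_smul]
        abel

lemma base_single {r : ℕ} (U : Submodule ℂ (Fin r → ℂ)) (hT : ∀ v ∈ U, bT r v ∈ U)
    (v : Fin r → ℂ) (hv : v ∈ U) (a : Fin r) (ha : v a ≠ 0) : Pi.single a 1 ∈ U := by
  classical
  have key : ∀ s : Finset (Fin r),
      (fun k : Fin r => (∏ b ∈ s, (((k : ℕ) : ℂ) - ((b : ℕ) : ℂ))) * v k) ∈ U := by
    intro s
    induction s using Finset.induction_on with
    | empty => simpa using hv
    | insert b s hb ih =>
      have := sub_mem (hT _ ih) (U.smul_mem (((b : ℕ) : ℂ) + 1) ih)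
      convert this using 1
      funext k
      simp only [Pi.sub_apply, Pi.smul_apply, bT_apply, smul_eq_mul]
      rw [Finset.prod_insert hb]
      ring
  have h := key (Finset.univ.erase a)
  have hne : (∏ b ∈ Finset.univ.erase a, (((a : ℕ) : ℂ) - ((b : ℕ) : ℂ))) * v a ≠ 0 := by
    apply mul_ne_zero _ ha
    rw [Finset.prod_ne_zero_iff]
    intro b hb
    exact fin_sub_ne (Finset.ne_of_mem_erase hb).symm
  have h2 := U.smul_mem (((∏ b ∈ Finset.univ.erase a, (((a : ℕ) : ℂ) - ((b : ℕ) : ℂ))) * v a)⁻¹) h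
  convert h2 using 1
  funext k
  by_cases hk : k = a
  · subst hk
    simp only [Pi.single_eq_same, Pi.smul_apply, smul_eq_mul]
    rw [inv_mul_cancel₀ hne]
  · rw [Pi.single_eq_of_ne hk]
    simp only [Pi.smul_apply, smul_eq_mul]
    have h0 : ∏ b ∈ Finset.univ.erase a, (((k : ℕ) : ℂ) - ((b : ℕ) : ℂ)) = 0 :=
      Finset.prod_eq_zero (Finset.mem_erase.2 ⟨hk, Finset.mem_univ k⟩) (sub_self _)
    rw [h0, zero_mul, mul_zero]

lemma base_simple {ℓ : ℕ} [NeZero ℓ] (hℓ : 2 ≤ ℓ) (θ : ZMod ℓ → ℂ) (hθ : ∑ i, θ i ≠ 0) (r : ℕ) :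
    GSimple (baseRep hℓ θ r) := by
  intro U P _ hX hY hx hy
  have h1 := zmod_one_ne hℓ
  have hstep : ∀ i, i + 1 ≠ 0 → U (i + 1) ≤ U i := by
    intro i hi v hv
    have := hX i v hv
    simpa [baseRep, hi] using this
  have hm : ∀ n : ℕ, n < ℓ → ((n : ℕ) : ZMod ℓ) ≠ 0 ∨ n = 0 := by
    intro n hn
    by_cases h : n = 0
    · exact Or.inr h
    · left
      rw [Ne, ZMod.natCast_eq_zero_iff]
      exact fun h2 => h (Nat.eq_zero_of_dvd_of_lt h2 hn)
  have hU0 : ∀ n : ℕ, n < ℓ → U (n : ZMod ℓ) ≤ U 0 := by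
    intro n
    induction n with
    | zero => intro _; simp
    | succ n ih =>
      intro hn
      have h2 := hm (n + 1) hn
      push_cast at h2 ⊢
      exact (hstep _ (by simpa using h2)).trans (ih (by omega))
  have hUi0 : ∀ i, U i ≤ U 0 := by
    intro i
    have := hU0 i.val i.val_lt
    simpa using this
  have hUm : ∀ n : ℕ, n < ℓ → U (-1) ≤ U (-1 - (n : ZMod ℓ)) := by
    intro n
    induction n with
    | zero => intro _; simp
    | succ n ih =>
      intro hn
      refine (ih (by omega)).trans ?_
      have h2 := hstep (-1 - ((n + 1 : ℕ) : ZMod ℓ)) (by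
        intro h
        rcases hm (n + 1) hn with h3 | h3
        · apply h3; linear_combination -h
        · omega)
      have e : -1 - ((n + 1 : ℕ) : ZMod ℓ) + 1 = -1 - (n : ZMod ℓ) := by push_cast; ring
      rwa [e] at h2
  have hUmi : ∀ i, U (-1) ≤ U i := by
    intro i
    have := hUm (-1 - i).val (ZMod.val_lt _)
    simpa using this
  have hT : ∀ v ∈ U 0, bT r v ∈ U (-1) := by
    intro v hv
    have := hX (-1) v (by simpa using hv)
    simpa [baseRep] using this
  have hZ : ∀ v ∈ U (-1), bZ r (∑ i, θ i) v ∈ U 0 := by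
    intro v hv
    have := hY (-1) v hv
    simpa [baseRep] using this
  have hes : ∀ v ∈ U 0, ∀ a, v a ≠ 0 → Pi.single a 1 ∈ U (-1) := by
    intro v hv a ha
    have h2 := base_single (U 0) (fun v hv => hUi0 _ (hT v hv)) v hv a ha
    have h3 := (U (-1)).smul_mem (((a : ℕ) + 1 : ℂ)⁻¹) (hT _ h2)
    convert h3 using 1
    funext k
    simp only [Pi.smul_apply, bT_apply, smul_eq_mul]
    by_cases hk : k = a
    · subst hk
      have : ((k : ℕ) + 1 : ℂ) ≠ 0 := by exact_mod_cast Nat.succ_ne_zero k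
      simp [this]
    · simp [Pi.single_eq_of_ne hk]
  have hall : ∀ a, Pi.single a 1 ∈ U (-1) → ∀ i, U i = ⊤ := by
    intro a ha
    have hb : ∀ b, Pi.single b 1 ∈ U (-1) := by
      intro b
      by_cases hab : b = a
      · rw [hab]; exact ha
      · apply hes _ (hZ _ ha) b
        rw [bZ_apply, Finset.sum_eq_single a]
        · simp only [bz, hab, ↓reduceIte, Pi.single_eq_same, mul_one]
          exact div_ne_zero (neg_ne_zero.2 hθ) (fin_sub_ne hab)
        · intro k _ hk
          simp [Pi.single_eq_of_ne hk]
        · simp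
    intro i
    rw [eq_top_iff]
    intro v _
    apply hUmi i
    rw [pi_eq_sum_univ' v]
    apply sum_mem
    intro k _
    apply Submodule.smul_mem
    convert hb k using 1
  by_cases hz : ∃ a : Fin r, Pi.single a 1 ∈ U (-1)
  · obtain ⟨a, ha⟩ := hz
    right
    refine ⟨hall a ha, ?_⟩
    by_contra hP
    have h2 := hy hP _ (hUi0 _ ha)
    change (∑ i, θ i) * ∑ k, (Pi.single a (1 : ℂ) : Fin r → ℂ) k = 0 at h2
    simp [hθ] at h2
  · have hbot : ∀ i, U i = ⊥ := by
      intro i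
      rw [eq_bot_iff]
      intro v hv
      rw [Submodule.mem_bot]
      funext a
      by_contra h
      exact hz ⟨a, hes v (hUi0 i hv) a h⟩
    by_cases hP : P
    · right
      refine ⟨?_, hP⟩
      have h2 := hx hP
      rw [hbot 0, Submodule.mem_bot] at h2
      intro i
      rw [hbot i]
      change ⊥ = ⊤
      rw [eq_comm, eq_bot_iff]
      intro v _
      rw [Submodule.mem_bot]
      funext a
      have := congrFun h2 a
      simp [baseRep] at this
    · exact Or.inl ⟨hbot, hP⟩

lemma GE_base {ℓ : ℕ} [NeZero ℓ] (hℓ : 2 ≤ ℓ) (θ : ZMod ℓ → ℂ) (hθ : ∑ i, θ i ≠ 0) (r : ℕ) :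
    GE ℓ θ (fun _ => r) := by
  refine ⟨Fin r → ℂ, _, _, inferInstance, baseRep hℓ θ r, base_simple hℓ θ hθ r, fun i => ?_⟩
  change Module.finrank ℂ (⊤ : Submodule ℂ (Fin r → ℂ)) = r
  simp

end base

lemma sum_sC {ℓ : ℕ} [NeZero ℓ] (hℓ : 2 ≤ ℓ) (j : ZMod ℓ) (θ : ZMod ℓ → ℂ) :
    ∑ i, sC ℓ j θ i = ∑ i, θ i := by
  have h : ∀ i, sC ℓ j θ i = θ i - θ j * (2 * (if i = j then 1 else 0)
      - (if i = j - 1 then 1 else 0) - (if i = j + 1 then 1 else 0)) := by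
    intro i
    rw [sC_eq hℓ]
    unfold Ca
    push_cast
    rfl
  simp only [h]
  rw [Finset.sum_sub_distrib, ← Finset.mul_sum, Finset.sum_sub_distrib, Finset.sum_sub_distrib,
    ← Finset.mul_sum]
  simp
  ring_nf
  simp

lemma GE.Ff_nonneg {ℓ : ℕ} [NeZero ℓ] (hℓ : 2 ≤ ℓ) {θ : ZMod ℓ → ℂ} {d : ZMod ℓ → ℕ}
    (h : GE ℓ θ d) : 0 ≤ Ff (fun i => (d i : ℤ)) := by
  induction hn : ∑ i, d i using Nat.strong_induction_on generalizing d θ with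
  | _ n ih =>
    by_cases hp : ∃ j, pr (fun i => (d i : ℤ)) j < 0
    · obtain ⟨j, hj⟩ := hp
      have hθ : θ j ≠ 0 := fun h0 => absurd (h.pr_nonneg hℓ j h0) (by omega)
      obtain ⟨d', h', e⟩ := h.reflect hℓ j hθ
      have hs : ((∑ i, d' i : ℕ) : ℤ) = ((∑ i, d i : ℕ) : ℤ) + pr (fun i => (d i : ℤ)) j := by
        push_cast
        rw [← sum_upd j, ← sInt_eq, ← e]
      have := ih (∑ i, d' i) (by omega) h' rfl
      rwa [e, Ff_sInt hℓ] at this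
    · push Not at hp
      have hc := const_of_pr_nonneg _ hp
      unfold Ff
      rw [Qf_const _ hc]
      change (0 : ℤ) ≤ 2 * (d 0 : ℤ) - 0
      omega

lemma GE_of_Cond {ℓ : ℕ} [NeZero ℓ] (hℓ : 2 ≤ ℓ) (d : ZMod ℓ → ℤ) (hF : 0 ≤ Ff d) :
    ∀ θ : ZMod ℓ → ℂ, ∑ i, θ i ≠ 0 → Cond θ d → ∀ d' : ZMod ℓ → ℕ,
      (fun i => (d' i : ℤ)) = d → GE ℓ θ d' := by
  refine descent hℓ (fun d => ∀ θ : ZMod ℓ → ℂ, ∑ i, θ i ≠ 0 → Cond θ d → ∀ d' : ZMod ℓ → ℕ,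
      (fun i => (d' i : ℤ)) = d → GE ℓ θ d') ?_ ?_ d hF
  · intro r θ hθ _ d' hd'
    have : d' = fun _ => r := by
      funext i
      have := congrFun hd' i
      exact_mod_cast this
    rw [this]
    exact GE_base hℓ θ hθ r
  · intro d j hd hj _ hs ih θ hθ hc d' hd'
    have h0 := hc.ne_zero j hj
    obtain ⟨d2, hd2⟩ : ∃ d2 : ZMod ℓ → ℕ, (fun i => (d2 i : ℤ)) = sInt ℓ j d :=
      ⟨fun i => (sInt ℓ j d i).toNat, by funext i; exact Int.toNat_of_nonneg (hs i)⟩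
    have h1 := ih (sC ℓ j θ) (by rw [sum_sC hℓ]; exact hθ) (hc.refl hℓ j hj) d2 hd2
    obtain ⟨d3, h3, e⟩ := h1.reflect hℓ j (by simpa [sC] using h0)
    rw [sC_sC] at h3
    rw [hd2, sInt_sInt hℓ, ← hd'] at e
    have : d3 = d' := by
      funext i
      have := congrFun e i
      exact_mod_cast this
    rwa [← this]

lemma mem_Eset_iff_Ff {ℓ : ℕ} [NeZero ℓ] (hℓ : 2 ≤ ℓ) (J : Set (ZMod ℓ))
    (θ : ZMod ℓ → ℂ) (hst : JStandard ℓ J θ) (ha : ∑ i : ZMod ℓ, θ i ≠ 0) (d : ZMod ℓ → ℕ) :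
    d ∈ Eset ℓ θ ↔ (0 ≤ Ff (fun i => (d i : ℤ)) ∧ ∀ j ∈ J, 0 ≤ pr (fun i => (d i : ℤ)) j) := by
  constructor
  · intro h
    have hG := Eset_to_GE h
    exact ⟨hG.Ff_nonneg hℓ, fun j hj => hG.pr_nonneg hℓ j (hst.zero j hj)⟩
  · rintro ⟨h1, h2⟩
    exact GE_to_Eset (GE_of_Cond hℓ _ h1 θ ha (hst.cond hℓ _ h2) d rfl)

/-! ### Diagonal profiles of partitions -/

def gg (n : ℤ → ℤ) (c : ℤ) : ℤ := n c - n (c + 1) + if c < 0 then 1 else 0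

def hh (n : ℤ → ℤ) (c : ℤ) : ℤ := gg n (c - 1) - gg n c

structure Valid (n : ℤ → ℤ) : Prop where
  bd : ∃ N : ℤ, ∀ c, N ≤ |c| → n c = 0
  g01 : ∀ c, 0 ≤ gg n c ∧ gg n c ≤ 1

lemma Valid.dec {n : ℤ → ℤ} (h : Valid n) {a b : ℤ} (ha : 0 ≤ a) (hab : a ≤ b) : n b ≤ n a := by
  obtain ⟨k, rfl⟩ := Int.le.dest hab
  clear hab
  induction k with
  | zero => simp
  | succ k ih =>
    have h1 := (h.g01 (a + k)).1
    unfold gg at h1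
    rw [if_neg (by omega)] at h1
    push_cast
    rw [← add_assoc]
    omega

lemma Valid.inc {n : ℤ → ℤ} (h : Valid n) {a b : ℤ} (hb : b ≤ 0) (hab : a ≤ b) : n a ≤ n b := by
  obtain ⟨k, rfl⟩ := Int.le.dest hab
  clear hab
  induction k with
  | zero => simp
  | succ k ih =>
    push_cast at hb
    have h1 := (h.g01 (a + k)).2
    unfold gg at h1
    rw [if_pos (by omega)] at h1
    have := ih (by omega)
    push_cast
    rw [← add_assoc]
    omega

lemma Valid.nonneg {n : ℤ → ℤ} (h : Valid n) (c : ℤ) : 0 ≤ n c := by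
  obtain ⟨N, hN⟩ := h.bd
  rcases le_total 0 c with hc | hc
  · have h1 := h.dec hc (show c ≤ c + |N| by linarith [abs_nonneg N])
    rw [hN _ (by
      rw [abs_of_nonneg (by linarith [abs_nonneg N])]
      linarith [le_abs_self N])] at h1
    exact h1
  · have h1 := h.inc hc (show c - |N| ≤ c by linarith [abs_nonneg N])
    rw [hN _ (by
      rw [abs_of_nonpos (by linarith [abs_nonneg N])]
      linarith [le_abs_self N])] at h1
    exact h1

/-- The diagonal profile. -/
def dN (ν : YoungDiagram) (c : ℤ) : ℤ := ((ν.cells.filter (fun p => rsd p = c)).card : ℤ)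

lemma lower_card (S : Finset ℕ) (h : ∀ a ∈ S, ∀ b ≤ a, b ∈ S) (k : ℕ) : k ∈ S ↔ k < S.card := by
  obtain ⟨m, hm⟩ : ∃ m, S = Finset.range m := by
    rcases S.eq_empty_or_nonempty with rfl | hne
    · exact ⟨0, rfl⟩
    · refine ⟨S.max' hne + 1, ?_⟩
      ext k
      rw [Finset.mem_range, Nat.lt_succ_iff]
      exact ⟨fun hk => S.le_max' k hk, fun hk => h _ (S.max'_mem hne) _ hk⟩
  rw [hm]; simp

lemma mem_dN (ν : YoungDiagram) (p : ℕ × ℕ) :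
    p ∈ ν.cells ↔ ((min p.1 p.2 : ℕ) : ℤ) < dN ν (rsd p) := by
  classical
  have hinj : Set.InjOn (fun q : ℕ × ℕ => min q.1 q.2)
      (ν.cells.filter (fun q => rsd q = rsd p)) := by
    rintro ⟨a, b⟩ h1 ⟨a', b'⟩ h2 h3
    have h4 := (Finset.mem_filter.1 h1).2
    have h5 := (Finset.mem_filter.1 h2).2
    simp only [rsd] at h3 h4 h5
    ext <;> simp only <;> omega
  have hc := Finset.card_image_of_injOn hinj
  unfold dN
  rw [← hc, Nat.cast_lt, ← lower_card]
  · constructor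
    · intro hp
      exact Finset.mem_image.2 ⟨p, by simpa using hp, rfl⟩
    · intro hp
      obtain ⟨q, hq, hqp⟩ := Finset.mem_image.1 hp
      rw [Finset.mem_filter] at hq
      have : q = p := by
        obtain ⟨a, b⟩ := p
        obtain ⟨a', b'⟩ := q
        have h4 := hq.2
        simp only [rsd] at h4 hqp
        ext <;> simp only <;> omega
      rw [← this]; exact hq.1
  · intro a ha b hb
    obtain ⟨⟨q1, q2⟩, hq, rfl⟩ := Finset.mem_image.1 ha
    rw [Finset.mem_filter] at hq
    simp only at hb
    refine Finset.mem_image.2 ⟨(q1 - (min q1 q2 - b), q2 - (min q1 q2 - b)), ?_, ?_⟩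
    · rw [Finset.mem_filter]
      constructor
      · exact ν.isLowerSet (a := (q1, q2)) (by constructor <;> simp) hq.1
      · rw [← hq.2]; simp only [rsd]; omega
    · simp only; omega

lemma dN_nonneg (ν : YoungDiagram) (c : ℤ) : 0 ≤ dN ν c := by unfold dN; positivity

/-- The box on diagonal `c` at height `k`. -/
def box (c : ℤ) (k : ℕ) : ℕ × ℕ := ((-c).toNat + k, c.toNat + k)

lemma rsd_box (c : ℤ) (k : ℕ) : rsd (box c k) = c := by unfold rsd box; simp only; omega

lemma min_box (c : ℤ) (k : ℕ) : min (box c k).1 (box c k).2 = k := by unfold box; simp only; omega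

lemma box_eq (p : ℕ × ℕ) : box (rsd p) (min p.1 p.2) = p := by
  unfold rsd box; ext <;> simp only <;> omega

lemma box_mem (ν : YoungDiagram) (c : ℤ) (k : ℕ) : box c k ∈ ν.cells ↔ (k : ℤ) < dN ν c := by
  rw [mem_dN, rsd_box, min_box]

lemma box_lower (ν : YoungDiagram) {c c' : ℤ} {k k' : ℕ} (h : (k' : ℤ) < dN ν c')
    (h1 : (box c k).1 ≤ (box c' k').1) (h2 : (box c k).2 ≤ (box c' k').2) : (k : ℤ) < dN ν c := by
  rw [← box_mem] at h ⊢
  exact ν.isLowerSet (a := box c' k') ⟨h1, h2⟩ h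

lemma dN_valid (ν : YoungDiagram) : Valid (dN ν) where
  bd := by
    refine ⟨((∑ p ∈ ν.cells, (p.1 + p.2) + 1 : ℕ) : ℤ), ?_⟩
    intro c hc
    unfold dN
    rw [Nat.cast_eq_zero, Finset.card_eq_zero, Finset.filter_eq_empty_iff]
    intro p hp h
    have h1 : p.1 + p.2 ≤ ∑ p ∈ ν.cells, (p.1 + p.2) :=
      Finset.single_le_sum (f := fun p : ℕ × ℕ => p.1 + p.2) (fun _ _ => Nat.zero_le _) hp
    unfold rsd at h
    have : |c| ≤ p.1 + p.2 := by rw [← h, abs_le]; constructor <;> omega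
    omega
  g01 := by
    intro c
    have p1 := dN_nonneg ν c
    have p2 := dN_nonneg ν (c + 1)
    unfold gg
    by_cases hc : c < 0
    · rw [if_pos hc]
      constructor
      · by_contra hcon
        have := box_lower ν (c := c) (k := (dN ν c).toNat) (c' := c + 1)
          (k' := (dN ν c).toNat + 1) (by omega) (by unfold box; simp only; omega)
          (by unfold box; simp only; omega)
        omega
      · by_contra hcon
        have := box_lower ν (c := c + 1) (k := (dN ν (c + 1)).toNat) (c' := c)
          (k' := (dN ν (c + 1)).toNat) (by omega) (by unfold box; simp only; omega)
          (by unfold box; simp only; omega)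
        omega
    · rw [if_neg hc]
      constructor
      · by_contra hcon
        have := box_lower ν (c := c) (k := (dN ν c).toNat) (c' := c + 1)
          (k' := (dN ν c).toNat) (by omega) (by unfold box; simp only; omega)
          (by unfold box; simp only; omega)
        omega
      · by_contra hcon
        have := box_lower ν (c := c + 1) (k := (dN ν (c + 1)).toNat) (c' := c)
          (k' := (dN ν (c + 1)).toNat + 1) (by omega) (by unfold box; simp only; omega)
          (by unfold box; simp only; omega)
        omega

lemma Valid.exists_diagram {n : ℤ → ℤ} (h : Valid n) : ∃ μ : YoungDiagram, dN μ = n := by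
  classical
  let C : Set (ℕ × ℕ) := {p | ((min p.1 p.2 : ℕ) : ℤ) < n (rsd p)}
  have hfin : C.Finite := by
    obtain ⟨N, hN⟩ := h.bd
    obtain ⟨M, hM⟩ := ((Set.finite_Icc (-N) N).image n).bddAbove
    have hsub : C ⊆ (Finset.range (M.toNat + N.toNat + 1) ×ˢ
        Finset.range (M.toNat + N.toNat + 1) : Finset (ℕ × ℕ)) := by
      rintro ⟨a, b⟩ hp
      change ((min a b : ℕ) : ℤ) < n (rsd (a, b)) at hp
      have h1 : |rsd (a, b)| < N := by
        by_contra hcon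
        rw [hN _ (not_lt.1 hcon)] at hp
        omega
      rw [abs_lt] at h1
      have h2 : n (rsd (a, b)) ≤ M := hM ⟨_, ⟨h1.1.le, h1.2.le⟩, rfl⟩
      unfold rsd at h1
      simp only at h1
      simp only [Finset.coe_product, Finset.coe_range, Set.mem_prod, Set.mem_Iio]
      omega
    exact (Finset.finite_toSet _).subset hsub
  have hstep1 : ∀ r s : ℕ, (r + 1, s) ∈ C → (r, s) ∈ C := by
    intro r s hp
    change ((min (r + 1) s : ℕ) : ℤ) < n (rsd (r + 1, s)) at hp
    change ((min r s : ℕ) : ℤ) < n (rsd (r, s))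
    have e : rsd (r, s) = rsd (r + 1, s) + 1 := by simp [rsd]; ring
    have hg := h.g01 (rsd (r + 1, s))
    unfold gg at hg
    rw [← e] at hg
    have hr : rsd (r + 1, s) = s - r - 1 := by simp [rsd]; ring
    split_ifs at hg with hc <;> omega
  have hstep2 : ∀ r s : ℕ, (r, s + 1) ∈ C → (r, s) ∈ C := by
    intro r s hp
    change ((min r (s + 1) : ℕ) : ℤ) < n (rsd (r, s + 1)) at hp
    change ((min r s : ℕ) : ℤ) < n (rsd (r, s))
    have e : rsd (r, s + 1) = rsd (r, s) + 1 := by simp [rsd]; ring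
    have hg := h.g01 (rsd (r, s))
    unfold gg at hg
    rw [← e] at hg
    have hr : rsd (r, s) = s - r := by simp [rsd]
    split_ifs at hg with hc <;> omega
  have hl1 : ∀ k r s : ℕ, (r + k, s) ∈ C → (r, s) ∈ C := by
    intro k
    induction k with
    | zero => intro r s hp; exact hp
    | succ k ih => intro r s hp; exact ih r s (hstep1 _ _ hp)
  have hl2 : ∀ k r s : ℕ, (r, s + k) ∈ C → (r, s) ∈ C := by
    intro k
    induction k with
    | zero => intro r s hp; exact hp
    | succ k ih => intro r s hp; exact ih r s (hstep2 _ _ hp)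
  let μ : YoungDiagram :=
    { cells := hfin.toFinset
      isLowerSet := by
        rintro ⟨a, b⟩ ⟨a', b'⟩ hle hp
        rw [Set.Finite.coe_toFinset] at hp ⊢
        obtain ⟨h1, h2⟩ := hle
        simp only at h1 h2
        obtain ⟨k, rfl⟩ := Nat.le.dest h1
        obtain ⟨m, rfl⟩ := Nat.le.dest h2
        exact hl2 m _ _ (hl1 k _ _ hp) }
  refine ⟨μ, ?_⟩
  funext c
  have key : ∀ k : ℕ, (k : ℤ) < dN μ c ↔ (k : ℤ) < n c := by
    intro k
    rw [← box_mem]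
    change box c k ∈ hfin.toFinset ↔ _
    rw [Set.Finite.mem_toFinset]
    change ((min (box c k).1 (box c k).2 : ℕ) : ℤ) < n (rsd (box c k)) ↔ _
    rw [rsd_box, min_box]
  have p1 := dN_nonneg μ c
  have p2 := h.nonneg c
  have k1 := key (dN μ c).toNat
  have k2 := key (n c).toNat
  omega

lemma le_of_dN {μ ν : YoungDiagram} (h : ∀ c, dN μ c ≤ dN ν c) : μ.cells ⊆ ν.cells := by
  intro p hp
  rw [mem_dN] at hp ⊢
  exact hp.trans_le (h _)

/-! ### Removing boxes -/

lemma exists_removable {μ ν : YoungDiagram} (h : μ.cells ⊆ ν.cells) (hne : μ.cells ≠ ν.cells) :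
    ∃ p, p ∉ μ.cells ∧ IsRemovable ν p := by
  classical
  have hne' : (ν.cells \ μ.cells).Nonempty := by
    rw [Finset.sdiff_nonempty]
    exact fun h2 => hne (h.antisymm h2)
  obtain ⟨p, hp, hmax⟩ := Finset.exists_max_image _ (fun p : ℕ × ℕ => p.1 + p.2) hne'
  rw [Finset.mem_sdiff] at hp
  refine ⟨p, hp.2, hp.1, ⟨ν.cells.erase p, ?_⟩, rfl⟩
  intro a b hba ha
  rw [Finset.mem_coe, Finset.mem_erase] at ha ⊢
  refine ⟨?_, ν.isLowerSet hba ha.2⟩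
  rintro rfl
  have ha' : a ∉ μ.cells := fun h2 => hp.2 (μ.isLowerSet hba h2)
  have := hmax a (Finset.mem_sdiff.2 ⟨ha.2, ha'⟩)
  apply ha.1
  obtain ⟨h1, h2⟩ := hba
  ext <;> omega

lemma obtainable_of_subset {μ ν : YoungDiagram} (h : μ.cells ⊆ ν.cells) : Obtainable ν μ := by
  classical
  induction hn : (ν.cells).card using Nat.strong_induction_on generalizing ν with
  | _ n ih =>
    by_cases hne : μ.cells = ν.cells
    · have : μ = ν := YoungDiagram.ext hne
      rw [this]
      exact Relation.ReflTransGen.refl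
    · obtain ⟨p, hp, hr⟩ := exists_removable h hne
      obtain ⟨ν', hν'⟩ := hr.2
      have hlt : ν'.cells.card < n := by
        rw [hν', ← hn]; exact Finset.card_erase_lt_of_mem hr.1
      have hsub : μ.cells ⊆ ν'.cells := by
        intro q hq
        rw [hν', Finset.mem_erase]
        exact ⟨fun h2 => hp (h2 ▸ hq), h hq⟩
      exact Relation.ReflTransGen.head ⟨p, hr, hν'⟩ (ih _ hlt hsub rfl)

lemma Obtainable.subset {μ ν : YoungDiagram} (h : Obtainable ν μ) : μ.cells ⊆ ν.cells := by
  induction h with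
  | refl => exact subset_rfl
  | tail _ h2 ih =>
    obtain ⟨c, _, hc⟩ := h2
    rw [hc]
    exact (Finset.erase_subset _ _).trans ih

lemma IsRemovable.hh_eq {ν : YoungDiagram} {p : ℕ × ℕ} (h : IsRemovable ν p) :
    gg (dN ν) (rsd p - 1) = 0 ∧ gg (dN ν) (rsd p) = 1 := by
  classical
  obtain ⟨hp, ν', hν'⟩ := h
  have e : ∀ c, dN ν' c = dN ν c - if c = rsd p then 1 else 0 := by
    intro c
    unfold dN
    rw [hν', Finset.filter_erase]
    by_cases hc : c = rsd p
    · have hm : p ∈ ν.cells.filter (fun q => rsd q = c) := by simp [hp, hc]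
      rw [Finset.card_erase_of_mem hm, if_pos hc, Nat.cast_sub (Finset.card_pos.2 ⟨p, hm⟩)]
      simp
    · rw [Finset.erase_eq_of_notMem, if_neg hc, sub_zero]
      intro hm
      exact hc (Finset.mem_filter.1 hm).2.symm
  have a1 := (dN_valid ν).g01 (rsd p - 1)
  have a2 := (dN_valid ν).g01 (rsd p)
  have b1 := (dN_valid ν').g01 (rsd p - 1)
  have b2 := (dN_valid ν').g01 (rsd p)
  unfold gg at *
  simp only [e, sub_add_cancel] at *
  rw [if_neg (show ¬ (rsd p - 1 = rsd p) by omega)] at b1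
  rw [if_neg (show ¬ (rsd p + 1 = rsd p) by omega)] at b2
  simp only [↓reduceIte] at b1 b2
  omega

/-! ### Residue vectors of profiles -/

/-- Sum of a function over contents congruent to `i`. -/
noncomputable def Dn (ℓ : ℕ) (n : ℤ → ℤ) (i : ZMod ℓ) : ℤ :=
  ∑ᶠ c : ℤ, if (c : ZMod ℓ) = i then n c else 0

def FS (n : ℤ → ℤ) : Prop := ∃ N : ℤ, ∀ c, N ≤ |c| → n c = 0

lemma FS.finite {n : ℤ → ℤ} (h : FS n) (ℓ : ℕ) (i : ZMod ℓ) :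
    (Function.support (fun c : ℤ => if (c : ZMod ℓ) = i then n c else 0)).Finite := by
  obtain ⟨N, hN⟩ := h
  apply (Set.finite_Icc (-N) N).subset
  intro c hc
  rw [Function.mem_support] at hc
  by_contra hcon
  apply hc
  rw [hN c, ite_self]
  by_contra h2
  rw [not_le, abs_lt] at h2
  exact hcon ⟨h2.1.le, h2.2.le⟩

lemma FS.shift {n : ℤ → ℤ} (h : FS n) (a : ℤ) : FS (fun c => n (c + a)) := by
  obtain ⟨N, hN⟩ := h
  refine ⟨N + |a|, fun c hc => hN _ ?_⟩
  have := abs_sub_abs_le_abs_sub c (-a)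
  rw [abs_neg, sub_neg_eq_add] at this
  linarith

lemma FS.add {n m : ℤ → ℤ} (h : FS n) (h' : FS m) : FS (fun c => n c + m c) := by
  obtain ⟨N, hN⟩ := h
  obtain ⟨M, hM⟩ := h'
  refine ⟨max N M, fun c hc => ?_⟩
  simp only [hN c ((le_max_left _ _).trans hc), hM c ((le_max_right _ _).trans hc), add_zero]

lemma FS.mul {n : ℤ → ℤ} (h : FS n) (a : ℤ) : FS (fun c => a * n c) := by
  obtain ⟨N, hN⟩ := h
  refine ⟨N, fun c hc => ?_⟩
  simp only [hN c hc, mul_zero]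

lemma Dn_add {ℓ : ℕ} {n m : ℤ → ℤ} (h : FS n) (h' : FS m) (i : ZMod ℓ) :
    Dn ℓ (fun c => n c + m c) i = Dn ℓ n i + Dn ℓ m i := by
  unfold Dn
  rw [← finsum_add_distrib (h.finite ℓ i) (h'.finite ℓ i)]
  congr 1
  funext c
  split_ifs <;> simp

lemma Dn_mul {ℓ : ℕ} {n : ℤ → ℤ} (h : FS n) (a : ℤ) (i : ZMod ℓ) :
    Dn ℓ (fun c => a * n c) i = a * Dn ℓ n i := by
  unfold Dn
  rw [mul_finsum]
  congr 1
  funext c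
  split_ifs <;> simp

lemma Dn_shift {ℓ : ℕ} (n : ℤ → ℤ) (a : ℤ) (i : ZMod ℓ) :
    Dn ℓ (fun c => n (c + a)) i = Dn ℓ n (i + a) := by
  unfold Dn
  rw [← finsum_comp_equiv (Equiv.addRight a) (f := fun c : ℤ => if (c : ZMod ℓ) = i + a then n c else 0)]
  congr 1
  funext c
  simp

lemma Dn_finset {ℓ : ℕ} (T : Finset ℤ) (f : ℤ → ℤ) (i : ZMod ℓ) :
    Dn ℓ (fun c => if c ∈ T then f c else 0) i = ∑ c ∈ T, if (c : ZMod ℓ) = i then f c else 0 := by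
  unfold Dn
  rw [finsum_eq_sum_of_support_subset (s := T)]
  · apply Finset.sum_congr rfl
    intro c hc
    simp [hc]
  · intro c hc
    rw [Function.mem_support] at hc
    by_contra h
    apply hc
    have h' : c ∉ T := h
    simp [h']

lemma FS_finset (T : Finset ℤ) (f : ℤ → ℤ) : FS (fun c => if c ∈ T then f c else 0) := by
  refine ⟨∑ c ∈ T, |c| + 1, fun c hc => ?_⟩
  have h : c ∉ T := by
    intro h
    have := Finset.single_le_sum (f := fun c : ℤ => |c|) (fun _ _ => abs_nonneg _) h
    have h2 : |c| ≤ ∑ c ∈ T, |c| := this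
    omega
  simp [h]

lemma Res_eq_Dn (ℓ : ℕ) (ν : YoungDiagram) (i : ZMod ℓ) : Res ℓ ν i = Dn ℓ (dN ν) i := by
  classical
  have h1 : dN ν = fun c => if c ∈ ν.cells.image rsd then dN ν c else 0 := by
    funext c
    split_ifs with h
    · rfl
    · unfold dN
      rw [Nat.cast_eq_zero, Finset.card_eq_zero, Finset.filter_eq_empty_iff]
      intro p hp hc
      exact h (Finset.mem_image.2 ⟨p, hp, hc⟩)
  rw [h1, Dn_finset]
  unfold Res
  rw [Finset.card_eq_sum_card_fiberwise (f := rsd) (t := ν.cells.image rsd)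
    (fun p hp => Finset.mem_image_of_mem _ (Finset.mem_filter.1 hp).1)]
  push_cast
  apply Finset.sum_congr rfl
  intro c _
  rw [Finset.filter_filter]
  unfold dN
  split_ifs with h
  · congr 2
    ext p
    rw [Finset.mem_filter, Finset.mem_filter]
    constructor
    · rintro ⟨a, _, b⟩; exact ⟨a, b⟩
    · rintro ⟨a, b⟩; exact ⟨a, by rw [← b] at h; exact h, b⟩
  · rw [Nat.cast_eq_zero, Finset.card_eq_zero, Finset.filter_eq_empty_iff]
    rintro p _ ⟨a, b⟩
    apply h
    rw [← b]; exact a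

lemma hh_eq (n : ℤ → ℤ) (c : ℤ) :
    hh n c = (n (c + 1) + n (c + -1)) + (-2) * n c + (if c ∈ ({0} : Finset ℤ) then 1 else 0) := by
  unfold hh gg
  rw [sub_add_cancel, ← sub_eq_add_neg]
  simp only [Finset.mem_singleton]
  split_ifs <;> omega

lemma pr_Dn {ℓ : ℕ} {n : ℤ → ℤ} (h : FS n) (j : ZMod ℓ) : pr (Dn ℓ n) j = Dn ℓ (hh n) j := by
  have e : hh n = fun c => (n (c + 1) + n (c + -1)) + (-2) * n c
      + (if c ∈ ({0} : Finset ℤ) then 1 else 0) := funext (hh_eq n)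
  rw [e, Dn_add (((h.shift 1).add (h.shift (-1))).add (h.mul (-2))) (FS_finset {0} (fun _ => 1)),
    Dn_add ((h.shift 1).add (h.shift (-1))) (h.mul (-2)), Dn_add (h.shift 1) (h.shift (-1)),
    Dn_shift, Dn_shift, Dn_mul h, Dn_finset]
  unfold pr
  simp only [Finset.sum_singleton, Int.cast_zero, Int.cast_one, Int.cast_neg, ← sub_eq_add_neg,
    eq_comm (a := (0 : ZMod ℓ))]
  ring

lemma FS_hh {n : ℤ → ℤ} (h : FS n) : FS (hh n) := by
  have e : hh n = fun c => (n (c + 1) + n (c + -1)) + (-2) * n c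
      + (if c ∈ ({0} : Finset ℤ) then 1 else 0) := funext (hh_eq n)
  rw [e]
  exact (((h.shift 1).add (h.shift (-1))).add (h.mul (-2))).add (FS_finset {0} (fun _ => 1))

lemma pr_Res (ℓ : ℕ) (ν : YoungDiagram) (j : ZMod ℓ) :
    ∃ F : Finset ℤ, (∀ c, c ∈ F ↔ ((c : ZMod ℓ) = j ∧ hh (dN ν) c ≠ 0)) ∧
      pr (Res ℓ ν) j = ∑ c ∈ F, hh (dN ν) c := by
  have hF : FS (dN ν) := (dN_valid ν).bd
  have hfin := (FS_hh hF).finite ℓ j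
  refine ⟨hfin.toFinset, ?_, ?_⟩
  · intro c
    rw [Set.Finite.mem_toFinset, Function.mem_support]
    simp
  · have e : Res ℓ ν = Dn ℓ (dN ν) := funext (Res_eq_Dn ℓ ν)
    rw [e, pr_Dn hF]
    unfold Dn
    rw [finsum_eq_sum _ hfin]
    apply Finset.sum_congr rfl
    intro c hc
    rw [Set.Finite.mem_toFinset, Function.mem_support] at hc
    have : (c : ZMod ℓ) = j := by
      by_contra h; simp [h] at hc
    simp [this]

/-- Adding (`ε = 1`) or removing (`ε = -1`) a set of boxes of the same residue. -/
lemma modify (ℓ : ℕ) (hℓ : 2 ≤ ℓ) (ν : YoungDiagram) (j : ZMod ℓ) (ε : ℤ) (hε : ε = 1 ∨ ε = -1)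
    (T : Finset ℤ) (hT : ∀ c ∈ T, (c : ZMod ℓ) = j ∧ hh (dN ν) c = ε) :
    ∃ μ : YoungDiagram, (∀ c, dN μ c = dN ν c + if c ∈ T then ε else 0) ∧
      Res ℓ μ = upd j (ε * T.card) (Res ℓ ν) := by
  have hF : FS (dN ν) := (dN_valid ν).bd
  have h1 := zmod_one_ne hℓ
  have hv : Valid (fun c => dN ν c + if c ∈ T then ε else 0) := by
    refine ⟨hF.add (FS_finset T (fun _ => ε)), ?_⟩
    intro c
    have g1 := (dN_valid ν).g01 (c - 1)
    have g2 := (dN_valid ν).g01 c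
    have g3 := (dN_valid ν).g01 (c + 1)
    have e : gg (fun c => dN ν c + if c ∈ T then ε else 0) c = gg (dN ν) c
        + (if c ∈ T then ε else 0) - (if c + 1 ∈ T then ε else 0) := by
      unfold gg; ring
    rw [e]
    by_cases hc : c ∈ T
    · have hc' : c + 1 ∉ T := by
        intro h
        have a := (hT c hc).1
        have b := (hT _ h).1
        push_cast at b
        rw [a] at b
        exact h1 (by simpa using b)
      have := (hT c hc).2
      unfold hh at this
      rw [if_pos hc, if_neg hc']
      omega
    · rw [if_neg hc]
      by_cases hc' : c + 1 ∈ T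
      · have := (hT _ hc').2
        unfold hh at this
        rw [add_sub_cancel_right] at this
        rw [if_pos hc']
        omega
      · rw [if_neg hc']
        omega
  obtain ⟨μ, hμ⟩ := hv.exists_diagram
  refine ⟨μ, fun c => by rw [hμ], ?_⟩
  funext i
  rw [Res_eq_Dn, hμ, Dn_add hF (FS_finset T (fun _ => ε)), ← Res_eq_Dn, Dn_finset]
  unfold upd
  congr 1
  by_cases hi : i = j
  · subst hi
    rw [Finset.sum_congr rfl (g := fun _ => ε) (fun c hc => by rw [if_pos (hT c hc).1])]
    simp [mul_comm]
  · rw [Finset.sum_congr rfl (g := fun _ => (0 : ℤ)) (fun c hc => by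
      rw [if_neg]; rw [(hT c hc).1]; exact fun h => hi h.symm)]
    simp [hi]

lemma hh_cases (ν : YoungDiagram) (c : ℤ) :
    hh (dN ν) c = -1 ∨ hh (dN ν) c = 0 ∨ hh (dN ν) c = 1 := by
  have g1 := (dN_valid ν).g01 (c - 1)
  have g2 := (dN_valid ν).g01 c
  unfold hh
  omega

lemma exists_refl (ℓ : ℕ) (hℓ : 2 ≤ ℓ) (ν : YoungDiagram) (j : ZMod ℓ) :
    ∃ μ : YoungDiagram, Res ℓ μ = sInt ℓ j (Res ℓ ν) := by
  classical
  obtain ⟨F, hF, hpr⟩ := pr_Res ℓ ν j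
  obtain ⟨ε, m, hε, hm⟩ : ∃ (ε : ℤ) (m : ℕ), (ε = 1 ∨ ε = -1) ∧ pr (Res ℓ ν) j = ε * m := by
    rcases le_total 0 (pr (Res ℓ ν) j) with h | h
    · exact ⟨1, (pr (Res ℓ ν) j).toNat, Or.inl rfl, by omega⟩
    · exact ⟨-1, (-pr (Res ℓ ν) j).toNat, Or.inr rfl, by omega⟩
  have hcard : m ≤ (F.filter (fun c => hh (dN ν) c = ε)).card := by
    have h1 : ε * pr (Res ℓ ν) j ≤ ((F.filter (fun c => hh (dN ν) c = ε)).card : ℤ) := by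
      rw [hpr, Finset.mul_sum, Finset.card_filter]
      push_cast
      apply Finset.sum_le_sum
      intro c _
      rcases hh_cases ν c with h | h | h <;> rcases hε with rfl | rfl <;> rw [h] <;> norm_num
    rw [hm] at h1
    have h2 : ε * (ε * (m : ℤ)) = m := by rcases hε with rfl | rfl <;> ring
    rw [h2] at h1
    exact_mod_cast h1
  obtain ⟨T, hT, hTc⟩ := Finset.exists_subset_card_eq hcard
  obtain ⟨μ, -, hμ⟩ := modify ℓ hℓ ν j ε hε T (by
    intro c hc
    have h2 := Finset.mem_filter.1 (hT hc)
    exact ⟨((hF c).1 h2.1).1, h2.2⟩)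
  refine ⟨μ, ?_⟩
  rw [hμ, hTc, ← hm, sInt_eq]

lemma Res_nonneg (ℓ : ℕ) (ν : YoungDiagram) (i : ZMod ℓ) : 0 ≤ Res ℓ ν i := by
  unfold Res; positivity

lemma Ff_Res (ℓ : ℕ) [NeZero ℓ] (hℓ : 2 ≤ ℓ) (ν : YoungDiagram) : 0 ≤ Ff (Res ℓ ν) := by
  induction hn : (∑ i, Res ℓ ν i).toNat using Nat.strong_induction_on generalizing ν with
  | _ n ih =>
    by_cases hp : ∃ j, pr (Res ℓ ν) j < 0
    · obtain ⟨j, hj⟩ := hp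
      obtain ⟨μ, hμ⟩ := exists_refl ℓ hℓ ν j
      have hs : ∑ i, Res ℓ μ i = ∑ i, Res ℓ ν i + pr (Res ℓ ν) j := by
        rw [hμ, sInt_eq, sum_upd]
      have h0 : 0 ≤ ∑ i, Res ℓ μ i := Finset.sum_nonneg (fun i _ => Res_nonneg ℓ μ i)
      have := ih _ (by omega) μ rfl
      rwa [hμ, Ff_sInt hℓ] at this
    · push Not at hp
      have hc := const_of_pr_nonneg _ hp
      unfold Ff
      rw [Qf_const _ hc]
      have := Res_nonneg ℓ ν 0
      omega

lemma exists_rect (ℓ : ℕ) [NeZero ℓ] (r : ℕ) :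
    ∃ ν : YoungDiagram, Res ℓ ν = fun _ => (r : ℤ) := by
  let T : Finset ℤ := (Finset.range (r * ℓ)).map Nat.castEmbedding
  have hTm : ∀ c : ℤ, c ∈ T ↔ 0 ≤ c ∧ c < (r * ℓ : ℕ) := by
    intro c
    simp only [T, Finset.mem_map, Finset.mem_range, Nat.castEmbedding_apply]
    constructor
    · rintro ⟨a, ha, rfl⟩; omega
    · rintro ⟨h1, h2⟩; exact ⟨c.toNat, by omega, by omega⟩
  have hv : Valid (fun c => if c ∈ T then 1 else 0) := by
    refine ⟨FS_finset T (fun _ => 1), ?_⟩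
    intro c
    unfold gg
    simp only [hTm]
    split_ifs <;> omega
  obtain ⟨ν, hν⟩ := hv.exists_diagram
  refine ⟨ν, ?_⟩
  funext i
  rw [Res_eq_Dn, hν, Dn_finset, Finset.sum_map]
  simp only [Nat.castEmbedding_apply, Int.cast_natCast]
  clear hν hv hTm
  clear ν T
  induction r with
  | zero => simp
  | succ r ih =>
    rw [Nat.succ_mul, Finset.sum_range_add, ih]
    have : ∑ x ∈ Finset.range ℓ, (if (((r * ℓ + x : ℕ)) : ZMod ℓ) = i then (1 : ℤ) else 0) = 1 := by
      have h2 := sum_zmod_range (fun k : ZMod ℓ => if k = i then (1 : ℤ) else 0)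
      rw [Finset.sum_ite_eq' Finset.univ i] at h2
      simp only [Finset.mem_univ, if_true] at h2
      refine Eq.trans (Finset.sum_congr rfl ?_) h2.symm
      intro x _
      simp
    rw [this]
    push_cast
    ring

lemma exists_Res (ℓ : ℕ) [NeZero ℓ] (hℓ : 2 ≤ ℓ) (d : ZMod ℓ → ℤ) (hd : 0 ≤ Ff d) :
    ∃ ν : YoungDiagram, Res ℓ ν = d := by
  refine descent hℓ (fun d => ∃ ν : YoungDiagram, Res ℓ ν = d) (exists_rect ℓ) ?_ d hd
  rintro d j _ _ _ _ ⟨ν, hν⟩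
  obtain ⟨μ, hμ⟩ := exists_refl ℓ hℓ ν j
  exact ⟨μ, by rw [hμ, hν, sInt_sInt hℓ]⟩

lemma CoreStep.Res_eq {ℓ : ℕ} [NeZero ℓ] {μ ν : YoungDiagram} (h : CoreStep ℓ ν μ) (i : ZMod ℓ) :
    Res ℓ ν i = Res ℓ μ i + 1 := by
  classical
  obtain ⟨h1, h2, h3⟩ := h
  have hsub := h1.subset
  have hcard : ((ν.cells \ μ.cells).filter (fun c => res ℓ c = i)).card = 1 := by
    have himg : (ν.cells \ μ.cells).image (res ℓ) = Finset.univ := by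
      apply Finset.eq_univ_of_card
      rw [Finset.card_image_of_injOn h3, h2, ZMod.card]
    have hi : i ∈ (ν.cells \ μ.cells).image (res ℓ) := by rw [himg]; exact Finset.mem_univ _
    obtain ⟨p, hp, hpi⟩ := Finset.mem_image.1 hi
    rw [Finset.card_eq_one]
    refine ⟨p, ?_⟩
    ext q
    rw [Finset.mem_filter, Finset.mem_singleton]
    constructor
    · rintro ⟨hq, hqi⟩
      exact h3 hq hp (hqi.trans hpi.symm)
    · rintro rfl; exact ⟨hp, hpi⟩
  unfold Res
  rw [← Finset.sdiff_union_of_subset hsub, Finset.filter_union, Finset.card_union_of_disjoint, hcard]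
  · push_cast; ring
  · exact Finset.disjoint_filter_filter Finset.sdiff_disjoint

lemma exists_core (ℓ : ℕ) [NeZero ℓ] (ν : YoungDiagram) :
    ∃ (r : ℕ) (μ : YoungDiagram), IsCore ℓ μ ∧ ∀ i, Res ℓ ν i = Res ℓ μ i + r := by
  induction hn : (Res ℓ ν 0).toNat using Nat.strong_induction_on generalizing ν with
  | _ n ih =>
    by_cases hc : IsCore ℓ ν
    · exact ⟨0, ν, hc, by simp⟩
    · unfold IsCore at hc
      rw [not_not] at hc
      obtain ⟨μ, hμ⟩ := hc
      have hr := CoreStep.Res_eq (ℓ := ℓ) (μ := μ) (ν := ν) hμ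
      have h0 := Res_nonneg ℓ μ 0
      have := hr 0
      obtain ⟨r, μ', h1, h2⟩ := ih _ (by omega) μ rfl
      exact ⟨r + 1, μ', h1, fun i => by rw [hr, h2]; push_cast; ring⟩

lemma IsCore.no_hook {ℓ : ℕ} (hℓ : 2 ≤ ℓ) {ν : YoungDiagram} (h : IsCore ℓ ν) (x : ℤ)
    (h0 : gg (dN ν) x = 0) (h1 : gg (dN ν) (x + ℓ) = 1) : False := by
  classical
  have hF : FS (dN ν) := (dN_valid ν).bd
  have hv : Valid (fun c => dN ν c + if c ∈ Finset.Icc (x + 1) (x + ℓ) then -1 else 0) := by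
    refine ⟨hF.add (FS_finset _ (fun _ => -1)), ?_⟩
    intro c
    have g := (dN_valid ν).g01 c
    have e : gg (fun c => dN ν c + if c ∈ Finset.Icc (x + 1) (x + ℓ) then -1 else 0) c
        = gg (dN ν) c + (if c ∈ Finset.Icc (x + 1) (x + ℓ) then -1 else 0)
          - (if c + 1 ∈ Finset.Icc (x + 1) (x + ℓ) then -1 else 0) := by
      unfold gg; ring
    rw [e]
    simp only [Finset.mem_Icc]
    by_cases hx : c = x
    · subst hx
      rw [if_neg (by omega), if_pos (by omega)]; omega
    · by_cases hx' : c = x + ℓ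
      · subst hx'
        rw [if_pos (by omega), if_neg (by omega)]; omega
      · split_ifs <;> omega
  obtain ⟨μ, hμ⟩ := hv.exists_diagram
  have hμ' : ∀ c, dN μ c = dN ν c + if c ∈ Finset.Icc (x + 1) (x + ℓ) then -1 else 0 := by
    intro c; rw [hμ]
  have hsub : μ.cells ⊆ ν.cells := by
    apply le_of_dN
    intro c
    rw [hμ' c]
    split_ifs <;> omega
  have hmem : ∀ p, p ∈ ν.cells \ μ.cells ↔
      (rsd p ∈ Finset.Icc (x + 1) (x + ℓ) ∧ ((min p.1 p.2 : ℕ) : ℤ) = dN ν (rsd p) - 1) := by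
    intro p
    rw [Finset.mem_sdiff, mem_dN, mem_dN, hμ']
    by_cases hp : rsd p ∈ Finset.Icc (x + 1) (x + ℓ)
    · rw [if_pos hp]
      simp only [hp, true_and]
      omega
    · rw [if_neg hp]
      simp only [hp, false_and, iff_false]
      omega
  have hinj : Set.InjOn rsd (↑(ν.cells \ μ.cells) : Set (ℕ × ℕ)) := by
    intro p hp q hq hpq
    rw [Finset.mem_coe, hmem] at hp hq
    rw [← box_eq p, ← box_eq q, hpq]
    have := hp.2
    rw [hpq, ← hq.2] at this
    have h3 : min p.1 p.2 = min q.1 q.2 := by exact_mod_cast this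
    rw [h3]
  apply h
  refine ⟨μ, obtainable_of_subset hsub, ?_, ?_⟩
  · rw [← Finset.card_image_of_injOn hinj]
    have : (ν.cells \ μ.cells).image rsd = Finset.Icc (x + 1) (x + ℓ) := by
      ext c
      rw [Finset.mem_image]
      constructor
      · rintro ⟨p, hp, rfl⟩
        exact ((hmem p).1 hp).1
      · intro hc
        have hpos := dN_nonneg μ c
        rw [hμ' c, if_pos hc] at hpos
        refine ⟨box c (dN ν c - 1).toNat, ?_, rsd_box _ _⟩
        rw [hmem, rsd_box, min_box]
        exact ⟨hc, by omega⟩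
    rw [this, Int.card_Icc]
    omega
  · intro p hp q hq hpq
    apply hinj hp hq
    rw [Finset.mem_coe, hmem] at hp hq
    have a := Finset.mem_Icc.1 hp.1
    have b := Finset.mem_Icc.1 hq.1
    unfold res at hpq
    rw [ZMod.intCast_eq_intCast_iff_dvd_sub] at hpq
    obtain ⟨k, hk⟩ := hpq
    have hk0 : k = 0 := by
      by_contra hne
      rcases lt_or_gt_of_ne hne with h2 | h2
      · have : (ℓ : ℤ) * k ≤ ℓ * (-1) := mul_le_mul_of_nonneg_left (by omega) (by omega)
        omega
      · have : (ℓ : ℤ) * 1 ≤ ℓ * k := mul_le_mul_of_nonneg_left (by omega) (by omega)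
        omega
    rw [hk0] at hk
    omega

lemma step_along (f : ℤ → ℤ) (hf : ∀ c, f c = 0 ∨ f c = 1) (a : ℤ) (ℓ : ℤ) (k : ℕ)
    (h0 : f a = 0) (h1 : f (a + ℓ * k) = 1) : ∃ x, f x = 0 ∧ f (x + ℓ) = 1 := by
  induction k with
  | zero => simp [h0] at h1
  | succ k ih =>
    rcases hf (a + ℓ * k) with h | h
    · refine ⟨a + ℓ * k, h, ?_⟩
      rw [← h1]; congr 1; push_cast; ring
    · exact ih h

lemma IsCore.pr_neg {ℓ : ℕ} (hℓ : 2 ≤ ℓ) {ν : YoungDiagram} (h : IsCore ℓ ν) (p : ℕ × ℕ)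
    (hp : IsRemovable ν p) : pr (Res ℓ ν) (res ℓ p) < 0 := by
  obtain ⟨F, hF, hpr⟩ := pr_Res ℓ ν (res ℓ p)
  obtain ⟨e1, e2⟩ := hp.hh_eq
  have hg : ∀ c, gg (dN ν) c = 0 ∨ gg (dN ν) c = 1 := by
    intro c
    have := (dN_valid ν).g01 c
    omega
  rw [hpr]
  have hle : ∀ c ∈ F, hh (dN ν) c ≤ 0 := by
    intro c hc
    by_contra hcon
    have hc1 := ((hF c).1 hc).1
    unfold hh at hcon
    have a1 := (dN_valid ν).g01 (c - 1)
    have a2 := (dN_valid ν).g01 c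
    unfold res at hc1
    rw [ZMod.intCast_eq_intCast_iff_dvd_sub] at hc1
    obtain ⟨k, hk⟩ := hc1
    rcases le_total 0 k with hk0 | hk0
    · obtain ⟨m, rfl⟩ := Int.eq_ofNat_of_zero_le hk0
      obtain ⟨x, hx0, hx1⟩ := step_along (gg (dN ν)) hg c ℓ m (by omega) (by
        rw [← hk]; rw [show c + (rsd p - c) = rsd p by ring]; exact e2)
      exact h.no_hook hℓ x hx0 hx1
    · obtain ⟨m, hm⟩ := Int.eq_ofNat_of_zero_le (show 0 ≤ -k by omega)
      obtain ⟨x, hx0, hx1⟩ := step_along (gg (dN ν)) hg (rsd p - 1) ℓ m e1 (by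
        rw [← hm, show rsd p - 1 + (ℓ : ℤ) * -k = c - 1 by linear_combination hk]
        omega)
      exact h.no_hook hℓ x hx0 hx1
  have hm : hh (dN ν) (rsd p) < 0 := by unfold hh; omega
  exact Finset.sum_neg' hle ⟨rsd p, (hF _).2 ⟨rfl, hm.ne⟩, hm⟩

lemma exists_removable_of_pr_neg {ℓ : ℕ} (hℓ : 2 ≤ ℓ) {ν : YoungDiagram} {j : ZMod ℓ}
    (h : pr (Res ℓ ν) j < 0) : ∃ p, IsRemovable ν p ∧ res ℓ p = j := by
  classical
  obtain ⟨F, hF, hpr⟩ := pr_Res ℓ ν j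
  rw [hpr] at h
  obtain ⟨c, hc, hneg⟩ : ∃ c ∈ F, hh (dN ν) c < 0 := by
    by_contra hcon
    push Not at hcon
    exact absurd (Finset.sum_nonneg hcon) (by omega)
  have hc1 := ((hF c).1 hc).1
  have hm1 : hh (dN ν) c = -1 := by rcases hh_cases ν c with h | h | h <;> omega
  obtain ⟨μ, hμ, -⟩ := modify ℓ hℓ ν j (-1) (Or.inr rfl) {c} (by
    intro c' hc'
    rw [Finset.mem_singleton] at hc'
    subst hc'
    exact ⟨hc1, hm1⟩)
  have hsub : μ.cells ⊆ ν.cells := by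
    apply le_of_dN
    intro c
    rw [hμ c]
    split_ifs <;> omega
  have hne : μ.cells ≠ ν.cells := by
    intro he
    have h2 := hμ c
    have : μ = ν := YoungDiagram.ext he
    rw [this] at h2
    simp at h2
  obtain ⟨p, hp, hr⟩ := exists_removable hsub hne
  refine ⟨p, hr, ?_⟩
  have hpν := hr.1
  rw [mem_dN] at hp hpν
  rw [hμ] at hp
  have : rsd p = c := by
    by_contra hcon
    simp [hcon] at hp hpν
    omega
  unfold res
  rw [this]; exact hc1

theorem core_iff (ℓ : ℕ) [NeZero ℓ] (hℓ : 2 ≤ ℓ) (J : Set (ZMod ℓ)) (d : ZMod ℓ → ℤ) :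
    (∃ (r : ℕ) (ν : YoungDiagram), IsCore ℓ ν ∧ IsJCore ℓ J ν ∧
        d = fun i => Res ℓ ν i + (r : ℤ) * delta ℓ i) ↔ (0 ≤ Ff d ∧ ∀ j ∈ J, 0 ≤ pr d j) := by
  simp only [delta, mul_one]
  constructor
  · rintro ⟨r, ν, _, hJ, rfl⟩
    constructor
    · rw [Ff_add_const]
      have := Ff_Res ℓ hℓ ν
      omega
    · intro j hj
      rw [pr_add_const]
      by_contra hcon
      obtain ⟨p, hp, hpj⟩ := exists_removable_of_pr_neg hℓ (not_le.1 hcon)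
      exact hJ p ⟨hp, by rw [hpj]; exact hj⟩
  · rintro ⟨h1, h2⟩
    obtain ⟨ν, hν⟩ := exists_Res ℓ hℓ d h1
    obtain ⟨r, μ, hc, hr⟩ := exists_core ℓ ν
    have hd : d = fun i => Res ℓ μ i + (r : ℤ) := by rw [← hν]; exact funext hr
    refine ⟨r, μ, hc, ?_, hd⟩
    rintro p ⟨hp, hpJ⟩
    have a := hc.pr_neg hℓ p hp
    have b := h2 _ hpJ
    rw [hd, pr_add_const] at b
    omega

/-- For `θ` `J`-standard with `∑ θ_i ≠ 0`:
`d ∈ E_θ` iff `d = Res_ℓ(ν) + r·δ_ℓ` for some `r ≥ 0` and some partition `ν` which is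
both an `ℓ`-core and a `J`-core. -/
theorem mem_Eset_iff_res_core (ℓ : ℕ) [NeZero ℓ] (hℓ : 2 ≤ ℓ) (J : Set (ZMod ℓ))
    (θ : ZMod ℓ → ℂ) (hst : JStandard ℓ J θ) (ha : ∑ i : ZMod ℓ, θ i ≠ 0)
    (d : ZMod ℓ → ℕ) :
    d ∈ Eset ℓ θ ↔
      ∃ (r : ℕ) (ν : YoungDiagram), IsCore ℓ ν ∧ IsJCore ℓ J ν ∧
        (fun i => (d i : ℤ)) = fun i => Res ℓ ν i + (r : ℤ) * delta ℓ i := by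
  rw [mem_Eset_iff_Ff hℓ J θ hst ha d]
  exact (core_iff ℓ hℓ J (fun i => (d i : ℤ))).symm

end CM
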